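/- Let p be a prime with p ≡ 2 (mod 3), and let k, n be nonnegative integers. Then, as an identity of integers, (p² + 1)·B_3(p^k·n + p^k − 1) = (p^{2k} − (−1)^k)·B_3(p·n + p − 1) + (p^{2k} + (−1)^k·p²)·B_3(n). -/

import Mathlib

/-- The hook length of the cell `(i, j)` in a Young diagram `μ`:
arm length + leg length + 1. -/
def YoungDiagram.hookLength (μ : YoungDiagram) (i j : ℕ) : ℕ :=
  μ.rowLen i + μ.colLen j - i - j - 1

/-- A Young diagram (equivalently, a partition) is a 3-core if none of its
hook numbers is divisible by 3. -/
def YoungDiagram.IsThreeCore (μ : YoungDiagram) : Prop :=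
  ∀ c ∈ μ.cells, ¬ (3 ∣ μ.hookLength c.1 c.2)

/-- `a3 n` is the number of 3-core partitions of `n`. -/
noncomputable def a3 (n : ℕ) : ℕ :=
  Nat.card {μ : YoungDiagram // μ.card = n ∧ μ.IsThreeCore}

/-- `A3 n` is the number of partition pairs of `n` in which each partition is a 3-core. -/
noncomputable def A3 (n : ℕ) : ℕ :=
  Nat.card {p : YoungDiagram × YoungDiagram //
    p.1.card + p.2.card = n ∧ p.1.IsThreeCore ∧ p.2.IsThreeCore}

/-- `B3 n` is the number of partition triples of `n` in which each partition is a 3-core. -/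
noncomputable def B3 (n : ℕ) : ℕ :=
  Nat.card {p : YoungDiagram × YoungDiagram × YoungDiagram //
    p.1.card + p.2.1.card + p.2.2.card = n ∧
    p.1.IsThreeCore ∧ p.2.1.IsThreeCore ∧ p.2.2.IsThreeCore}

/-!
A partition is determined by its beta set, the set of hook lengths in its first column. It is a
3-core if and only if its beta set is flush on the 3-abacus, hence consists of the first `u`
numbers `≡ 1` and the first `v` numbers `≡ 2` modulo 3. Completing squares in the size of this
partition identifies the 3-cores of size `n` with the Eisenstein integers of norm `3n + 1` in a
sector and a residue class which together hold one of every six associates. Unique factorisation in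
`ℤ[ω]` shows that their number is `R(3n + 1)`, where `R(n) = ∑_{d ∣ n} χ₃(d)`.

Liouville's method, that is, unimodular substitutions in the equation `a x + b y = n`, evaluates
the convolution of `R(3n + 1)` with itself as `σ(3n + 2) / 3`, and the convolution of `R(3n + 1)`
with `σ(3n + 2)` as `3 f(n + 1)`, where `f(n) = ∑_{d x = n} d² χ₃(x)`. Therefore
`B₃(n) = f(n + 1)`, and the claim is the solution of the linear recurrence
`f(p² K) = (p² - 1) f(p K) + p² f(K)`, valid for primes `p ≡ 2` modulo 3.
-/

open Finset

/-- The nontrivial character modulo 3, with values in `ℤ`. -/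
def χ₃ : MulChar (ZMod 3) ℤ where
  toFun a := match a with
    | 0 => 0
    | 1 => 1
    | 2 => -1
  map_one' := rfl
  map_mul' := by decide
  map_nonunit' := by decide

/-- The divisor sum `∑ g(d, x)` over all factorisations `n = d x`. It vanishes at `n = 0`, where
there are no divisors by convention. -/
def divisorSum (g : ℕ → ℕ → ℤ) (n : ℕ) : ℤ :=
  ∑ v ∈ n.divisorsAntidiagonal, g v.1 v.2

section DivisorSum

variable {p : ℕ}

lemma divisorSum_swap (g : ℕ → ℕ → ℤ) (n : ℕ) :
    divisorSum (fun d x ↦ g x d) n = divisorSum g n := by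
  rw [divisorSum, ← Nat.map_swap_divisorsAntidiagonal, sum_map]
  rfl

lemma divisorSum_const_mul (c : ℤ) (g : ℕ → ℕ → ℤ) (n : ℕ) :
    divisorSum (fun d x ↦ c * g d x) n = c * divisorSum g n :=
  (mul_sum ..).symm

lemma divisorSum_filter_dvd_fst (hp : 0 < p) (g : ℕ → ℕ → ℤ) (K : ℕ) :
    divisorSum (fun d x ↦ if p ∣ d then g d x else 0) (p * K) =
      divisorSum (fun d x ↦ g (p * d) x) K := by
  simp only [divisorSum]
  rw [← sum_filter]
  refine sum_nbij' (fun v ↦ (v.1 / p, v.2)) (fun v ↦ (p * v.1, v.2)) ?_ ?_ ?_ ?_ ?_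
  · rintro ⟨_, x⟩ hv
    simp only [Nat.mem_divisorsAntidiagonal, mem_filter] at hv ⊢
    obtain ⟨⟨hprod, hne⟩, d, rfl⟩ := hv
    rw [Nat.mul_div_cancel_left _ hp]
    exact ⟨Nat.eq_of_mul_eq_mul_left hp (by rw [← hprod, mul_assoc]), right_ne_zero_of_mul hne⟩
  · rintro ⟨d, x⟩ hv
    simp only [Nat.mem_divisorsAntidiagonal, mem_filter] at hv ⊢
    exact ⟨⟨by rw [mul_assoc, hv.1], mul_ne_zero hp.ne' hv.2⟩, dvd_mul_right _ _⟩
  · rintro ⟨d, x⟩ hv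
    simp only [mem_filter] at hv
    simp only [Nat.mul_div_cancel' hv.2]
  · rintro ⟨d, x⟩ _
    simp only [Nat.mul_div_cancel_left _ hp]
  · rintro ⟨d, x⟩ hv
    simp only [mem_filter] at hv
    simp only [Nat.mul_div_cancel' hv.2]

lemma divisorSum_filter_dvd_snd (hp : 0 < p) (g : ℕ → ℕ → ℤ) (K : ℕ) :
    divisorSum (fun d x ↦ if p ∣ x then g d x else 0) (p * K) =
      divisorSum (fun d x ↦ g d (p * x)) K := by
  rw [← divisorSum_swap, divisorSum_filter_dvd_fst hp (fun d x ↦ g x d) K,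
    divisorSum_swap (fun d x ↦ g d (p * x))]

lemma divisorSum_eq_zero_of_not_dvd {n : ℕ} (hn : ¬ p ∣ n) (g : ℕ → ℕ → ℤ) :
    divisorSum (fun d x ↦ if p ∣ d then g d x else 0) n = 0 := by
  refine sum_eq_zero fun v hv ↦ if_neg fun hdvd ↦ hn ?_
  rw [← (Nat.mem_divisorsAntidiagonal.1 hv).1]
  exact hdvd.mul_right _

/-- Since `p` is prime, it divides one of the two factors of `p K`. -/
lemma divisorSum_prime_mul (hp : p.Prime) {g : ℕ → ℕ → ℤ} {A B : ℤ}
    (hA : ∀ d x, g (p * d) x = A * g d x) (hB : ∀ d x, g d (p * x) = B * g d x) (K : ℕ) :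
    divisorSum g (p * K) =
      (A + B) * divisorSum g K - if p ∣ K then A * B * divisorSum g (K / p) else 0 := by
  have hfst : divisorSum (fun d x ↦ if p ∣ d then g d x else 0) (p * K) = A * divisorSum g K := by
    rw [divisorSum_filter_dvd_fst hp.pos, ← divisorSum_const_mul]
    simp only [hA]
  have hsnd : divisorSum (fun d x ↦ if p ∣ x then g d x else 0) (p * K) = B * divisorSum g K := by
    rw [divisorSum_filter_dvd_snd hp.pos, ← divisorSum_const_mul]
    simp only [hB]
  have hboth : divisorSum (fun d x ↦ if p ∣ d then (if p ∣ x then g d x else 0) else 0) (p * K) =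
      if p ∣ K then A * B * divisorSum g (K / p) else 0 := by
    rw [divisorSum_filter_dvd_fst hp.pos, ← divisorSum_swap]
    split_ifs with hK
    · obtain ⟨L, rfl⟩ := hK
      rw [divisorSum_filter_dvd_fst hp.pos, divisorSum_swap (fun d x ↦ g (p * d) (p * x)),
        Nat.mul_div_cancel_left _ hp.pos, ← divisorSum_const_mul]
      simp only [hA, hB, mul_assoc]
    · exact divisorSum_eq_zero_of_not_dvd hK _
  rw [← hboth, add_mul, ← hfst, ← hsnd]
  simp only [divisorSum]
  rw [← sum_add_distrib, ← sum_sub_distrib]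
  refine sum_congr rfl fun v hv ↦ ?_
  have hdvd : p ∣ v.1 ∨ p ∣ v.2 :=
    hp.dvd_mul.1 ((Nat.mem_divisorsAntidiagonal.1 hv).1 ▸ dvd_mul_right _ _)
  by_cases hd : p ∣ v.1 <;> by_cases hx : p ∣ v.2 <;> simp_all

end DivisorSum

/-- The divisor sum `R(n) = ∑_{d ∣ n} χ₃(d)`. -/
def chiSum : ℕ → ℤ := divisorSum fun d _ ↦ χ₃ d

/-- The sum of divisors `σ(n)`, as an integer. -/
def sigmaSum : ℕ → ℤ := divisorSum fun d _ ↦ d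

/-- The twisted divisor sum `f(n) = ∑_{d x = n} d² χ₃(x)`. -/
def squareChiSum : ℕ → ℤ := divisorSum fun d x ↦ (d : ℤ) ^ 2 * χ₃ x

lemma chiSum_prime_mul {p : ℕ} (hp : p.Prime) (K : ℕ) :
    chiSum (p * K) =
      (χ₃ p + 1) * chiSum K - if p ∣ K then χ₃ p * chiSum (K / p) else 0 := by
  simpa only [chiSum, mul_one] using
    divisorSum_prime_mul hp (g := fun d _ ↦ χ₃ d) (A := χ₃ p) (B := 1)
      (fun d _ ↦ by rw [Nat.cast_mul, map_mul]) (fun _ _ ↦ (one_mul _).symm) K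

/-- If `d x ≡ 2` modulo 3, then `χ₃ d` and `χ₃ x` cancel. -/
lemma chiSum_eq_zero {n : ℕ} (hn : (n : ZMod 3) = 2) : chiSum n = 0 := by
  have hcancel : ∀ d x : ZMod 3, d * x = 2 → χ₃ d + χ₃ x = 0 := by decide
  have hdouble : chiSum n + chiSum n = 0 := by
    nth_rewrite 2 [chiSum]
    rw [← divisorSum_swap, chiSum, divisorSum, divisorSum, ← sum_add_distrib]
    refine sum_eq_zero fun v hv ↦ hcancel _ _ ?_
    rw [← Nat.cast_mul, (Nat.mem_divisorsAntidiagonal.1 hv).1, hn]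
  omega

lemma squareChiSum_prime_mul_prime_mul {p : ℕ} (hp : p.Prime) (hp3 : p % 3 = 2) (K : ℕ) :
    squareChiSum (p * (p * K)) =
      ((p : ℤ) ^ 2 - 1) * squareChiSum (p * K) + (p : ℤ) ^ 2 * squareChiSum K := by
  have hχ : χ₃ p = -1 := by
    rw [(ZMod.natCast_eq_natCast_iff' p 2 3).2 hp3]
    decide
  have hrec := divisorSum_prime_mul hp (g := fun d x ↦ (d : ℤ) ^ 2 * χ₃ x) (A := (p : ℤ) ^ 2)
    (B := -1) (fun d x ↦ by push_cast; ring)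
    (fun d x ↦ by rw [Nat.cast_mul, map_mul, hχ]; ring) (p * K)
  rw [if_pos (dvd_mul_right _ _), Nat.mul_div_cancel_left _ hp.pos] at hrec
  simp only [squareChiSum, hrec]
  ring

lemma squareChiSum_prime_pow_mul {p : ℕ} (hp : p.Prime) (hp3 : p % 3 = 2) (K k : ℕ) :
    ((p : ℤ) ^ 2 + 1) * squareChiSum (p ^ k * K) =
      ((p : ℤ) ^ (2 * k) - (-1) ^ k) * squareChiSum (p * K) +
        ((p : ℤ) ^ (2 * k) + (-1) ^ k * (p : ℤ) ^ 2) * squareChiSum K := by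
  induction k using Nat.twoStepInduction with
  | zero => simp only [pow_zero, mul_zero, one_mul]; ring
  | one => simp only [pow_one, mul_one]; ring
  | more k ih₀ ih₁ =>
    have hrec := squareChiSum_prime_mul_prime_mul hp hp3 (p ^ k * K)
    rw [show p ^ (k + 1) * K = p * (p ^ k * K) by ring] at ih₁
    rw [show p ^ (k + 2) * K = p * (p * (p ^ k * K)) by ring]
    linear_combination ((p : ℤ) ^ 2 + 1) * hrec + ((p : ℤ) ^ 2 - 1) * ih₁ + (p : ℤ) ^ 2 * ih₀

/-- The set of quadruples `(a, b, x, y)` of positive integers with `a x + b y = n`. -/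
def quads (n : ℕ) : Finset (ℕ × ℕ × ℕ × ℕ) :=
  {v ∈ Icc 1 n ×ˢ Icc 1 n ×ˢ Icc 1 n ×ˢ Icc 1 n | v.1 * v.2.2.1 + v.2.1 * v.2.2.2 = n}

/-- The quadruples in `quads n` with `y < x`. -/
def halfQuads (n : ℕ) : Finset (ℕ × ℕ × ℕ × ℕ) :=
  {v ∈ quads n | v.2.2.2 < v.2.2.1}

/-- The sum of `F a b x y` over a set of quadruples. The weight `F` takes integer arguments, so that
the differences produced by the change of variables of `quadSum_lt_fst` are not truncated. -/
def quadSum (s : Finset (ℕ × ℕ × ℕ × ℕ)) (F : ℤ → ℤ → ℤ → ℤ → ℤ) : ℤ :=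
  ∑ v ∈ s, F v.1 v.2.1 v.2.2.1 v.2.2.2

section QuadSum

variable {F G : ℤ → ℤ → ℤ → ℤ → ℤ}

lemma mem_quads {n a b x y : ℕ} :
    (a, b, x, y) ∈ quads n ↔ 0 < a ∧ 0 < b ∧ 0 < x ∧ 0 < y ∧ a * x + b * y = n := by
  simp only [quads, mem_filter, mem_product, mem_Icc]
  refine ⟨by omega, fun ⟨ha, hb, hx, hy, _⟩ ↦ ?_⟩
  have := Nat.le_mul_of_pos_right a hx
  have := Nat.le_mul_of_pos_left x ha
  have := Nat.le_mul_of_pos_right b hy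
  have := Nat.le_mul_of_pos_left y hb
  omega

lemma quadSum_filter_swap (P : ℕ → ℕ → ℕ → ℕ → Prop) [∀ a b x y, Decidable (P a b x y)] (n : ℕ)
    (F : ℤ → ℤ → ℤ → ℤ → ℤ) :
    quadSum {v ∈ quads n | P v.2.1 v.1 v.2.2.2 v.2.2.1} F =
      quadSum {v ∈ quads n | P v.1 v.2.1 v.2.2.1 v.2.2.2} (fun a b x y ↦ F b a y x) := by
  refine sum_nbij' (fun v ↦ (v.2.1, v.1, v.2.2.2, v.2.2.1))
    (fun v ↦ (v.2.1, v.1, v.2.2.2, v.2.2.1)) ?_ ?_ (fun _ _ ↦ rfl) (fun _ _ ↦ rfl) (fun _ _ ↦ rfl)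
  all_goals
    rintro ⟨a, b, x, y⟩ hv
    simp only [mem_filter, mem_quads] at hv ⊢
    refine ⟨by omega, hv.2⟩

lemma quadSum_swap (n : ℕ) (F : ℤ → ℤ → ℤ → ℤ → ℤ) :
    quadSum (quads n) (fun a b x y ↦ F b a y x) = quadSum (quads n) F := by
  simpa only [filter_true] using (quadSum_filter_swap (fun _ _ _ _ ↦ True) n F).symm

lemma quadSum_transpose_fst (n : ℕ) (F : ℤ → ℤ → ℤ → ℤ → ℤ) :
    quadSum (quads n) (fun a b x y ↦ F x b a y) = quadSum (quads n) F := by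
  refine sum_nbij' (fun v ↦ (v.2.2.1, v.2.1, v.1, v.2.2.2))
    (fun v ↦ (v.2.2.1, v.2.1, v.1, v.2.2.2)) ?_ ?_ (fun _ _ ↦ rfl) (fun _ _ ↦ rfl) (fun _ _ ↦ rfl)
  all_goals
    rintro ⟨a, b, x, y⟩ hv
    simp only [mem_quads] at hv ⊢
    simp only [mul_comm x a, hv, and_self]

lemma quadSum_lt_fst (n : ℕ) (F : ℤ → ℤ → ℤ → ℤ → ℤ) :
    quadSum {v ∈ quads n | v.1 < v.2.1} F =
      quadSum (halfQuads n) (fun a b x y ↦ F a (a + b) (x - y) y) := by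
  refine sum_nbij' (fun v ↦ (v.1, v.2.1 - v.1, v.2.2.1 + v.2.2.2, v.2.2.2))
    (fun v ↦ (v.1, v.1 + v.2.1, v.2.2.1 - v.2.2.2, v.2.2.2)) ?_ ?_ ?_ ?_ ?_
  all_goals
    rintro ⟨a, b, x, y⟩ hv
    simp only [halfQuads, mem_filter, mem_quads] at hv
    obtain ⟨⟨ha, hb, hx, hy, hn⟩, hlt⟩ := hv
  · obtain ⟨c, rfl⟩ := Nat.exists_eq_add_of_lt hlt
    simp only [halfQuads, mem_filter, mem_quads, add_assoc, Nat.add_sub_cancel_left]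
    refine ⟨⟨ha, by omega, by omega, hy, ?_⟩, by omega⟩
    linear_combination hn
  · obtain ⟨z, rfl⟩ := Nat.exists_eq_add_of_lt hlt
    simp only [mem_filter, mem_quads, add_assoc, Nat.add_sub_cancel_left]
    refine ⟨⟨ha, by omega, by omega, hy, ?_⟩, by omega⟩
    linear_combination hn
  · simp only [Nat.add_sub_cancel' hlt.le, Nat.add_sub_cancel]
  · simp only [Nat.sub_add_cancel hlt.le, Nat.add_sub_cancel_left]
  · push_cast [hlt.le]
    simp only [add_sub_cancel, add_sub_cancel_right]

/-- The unimodular substitutions `(a, b, x, y) ↦ (a, a + b, x - y, y)` and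
`(a, b, x, y) ↦ (a + b, a, y, x - y)` preserve the form `a x + b y` and map the region `y < x` onto
the regions `a < b` and `b < a`. -/
lemma quadSum_eq_half_add_diag_fst
    (hFG : ∀ a b x y, F a (a + b) (x - y) y + F (a + b) a y (x - y) = G a b x y) (n : ℕ) :
    quadSum (quads n) F = quadSum (halfQuads n) G + quadSum {v ∈ quads n | v.1 = v.2.1} F := by
  have hne : quadSum {v ∈ quads n | v.1 ≠ v.2.1} F =
      quadSum {v ∈ quads n | v.1 < v.2.1} F + quadSum {v ∈ quads n | v.2.1 < v.1} F := by
    simp only [ne_iff_lt_or_gt, filter_or]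
    exact sum_union (disjoint_filter.2 fun _ _ h ↦ h.not_gt)
  have hlt : quadSum {v ∈ quads n | v.2.1 < v.1} F =
      quadSum (halfQuads n) (fun a b x y ↦ F (a + b) a y (x - y)) :=
    (quadSum_filter_swap (fun a b _ _ ↦ a < b) n F).trans (quadSum_lt_fst n _)
  have hG : quadSum (halfQuads n) G = quadSum {v ∈ quads n | v.1 ≠ v.2.1} F := by
    rw [hne, hlt, quadSum_lt_fst]
    simp only [quadSum, ← sum_add_distrib, hFG]
  rw [hG]
  exact (sum_filter_not_add_sum_filter ..).symm

lemma quadSum_eq_half_add_diag_snd (hFG : ∀ a b x y, F a b x y + F b a y x = G a b x y) (n : ℕ) :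
    quadSum (quads n) F =
      quadSum (halfQuads n) G + quadSum {v ∈ quads n | v.2.2.1 = v.2.2.2} F := by
  have hne : quadSum {v ∈ quads n | v.2.2.1 ≠ v.2.2.2} F =
      quadSum {v ∈ quads n | v.2.2.1 < v.2.2.2} F + quadSum (halfQuads n) F := by
    simp only [ne_iff_lt_or_gt, filter_or]
    exact sum_union (disjoint_filter.2 fun _ _ h ↦ h.not_gt)
  have hlt : quadSum {v ∈ quads n | v.2.2.1 < v.2.2.2} F =
      quadSum (halfQuads n) (fun a b x y ↦ F b a y x) :=
    quadSum_filter_swap (fun _ _ x y ↦ y < x) n F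
  have hG : quadSum (halfQuads n) G = quadSum {v ∈ quads n | v.2.2.1 ≠ v.2.2.2} F := by
    rw [hne, hlt, add_comm]
    simp only [quadSum, ← sum_add_distrib, hFG]
  rw [hG]
  exact (sum_filter_not_add_sum_filter ..).symm

lemma quadSum_eq_half_fst
    (hFG : ∀ a b x y, F a (a + b) (x - y) y + F (a + b) a y (x - y) = G a b x y)
    (hF : ∀ a x y, F a a x y = 0) (n : ℕ) :
    quadSum (quads n) F = quadSum (halfQuads n) G := by
  rw [quadSum_eq_half_add_diag_fst hFG, add_eq_left]
  exact sum_eq_zero fun v hv ↦ by rw [(mem_filter.1 hv).2, hF]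

lemma quadSum_eq_half_snd (hFG : ∀ a b x y, F a b x y + F b a y x = G a b x y)
    (hF : ∀ a b x, F a b x x = 0) (n : ℕ) :
    quadSum (quads n) F = quadSum (halfQuads n) G := by
  rw [quadSum_eq_half_add_diag_snd hFG, add_eq_left]
  exact sum_eq_zero fun v hv ↦ by rw [(mem_filter.1 hv).2, hF]

lemma quadSum_eq_snd (n : ℕ) (F : ℤ → ℤ → ℤ → ℤ → ℤ) :
    quadSum {v ∈ quads n | v.2.2.1 = v.2.2.2} F =
      divisorSum (fun c x ↦ ∑ a ∈ Ico 1 c, F a (c - a) x x) n := by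
  rw [quadSum, divisorSum, sum_sigma']
  refine sum_nbij' (fun v ↦ ⟨(v.1 + v.2.1, v.2.2.1), v.1⟩)
    (fun v ↦ (v.2, v.1.1 - v.2, v.1.2, v.1.2)) ?_ ?_ ?_ ?_ ?_
  · rintro ⟨a, b, x, y⟩ hv
    simp only [mem_filter, mem_quads, mem_sigma, Nat.mem_divisorsAntidiagonal, mem_Ico] at hv ⊢
    obtain ⟨⟨ha, hb, hx, hy, rfl⟩, rfl⟩ := hv
    exact ⟨⟨add_mul .., by positivity⟩, by omega⟩
  · rintro ⟨⟨c, x⟩, a⟩ hv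
    simp only [mem_filter, mem_quads, mem_sigma, Nat.mem_divisorsAntidiagonal, mem_Ico] at hv ⊢
    obtain ⟨⟨rfl, hne⟩, ha, hac⟩ := hv
    have hx := Nat.pos_of_ne_zero (right_ne_zero_of_mul hne)
    refine ⟨⟨ha, by omega, hx, hx, ?_⟩, trivial⟩
    rw [← add_mul, Nat.add_sub_cancel' hac.le]
  · rintro ⟨a, b, x, y⟩ hv
    simp only [mem_filter] at hv
    simp only [hv.2, Nat.add_sub_cancel_left]
  · rintro ⟨⟨c, x⟩, a⟩ hv
    simp only [mem_sigma, mem_Ico] at hv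
    simp only [Nat.add_sub_cancel' hv.2.2.le]
  · rintro ⟨a, b, x, y⟩ hv
    simp only [mem_filter] at hv
    simp only [hv.2, Nat.cast_add, add_sub_cancel_left]

lemma quadSum_eq_fst (n : ℕ) (F : ℤ → ℤ → ℤ → ℤ → ℤ) :
    quadSum {v ∈ quads n | v.1 = v.2.1} F =
      divisorSum (fun c x ↦ ∑ a ∈ Ico 1 c, F x x a (c - a)) n := by
  rw [← quadSum_eq_snd n (fun a b x y ↦ F x y a b)]
  refine sum_nbij' (fun v ↦ (v.2.2.1, v.2.2.2, v.1, v.2.1))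
    (fun v ↦ (v.2.2.1, v.2.2.2, v.1, v.2.1)) ?_ ?_ (fun _ _ ↦ rfl) (fun _ _ ↦ rfl) (fun _ _ ↦ rfl)
  all_goals
    rintro ⟨a, b, x, y⟩ hv
    simp only [mem_filter, mem_quads] at hv ⊢
    refine ⟨⟨hv.1.2.2.1, hv.1.2.2.2.1, hv.1.1, hv.1.2.1, ?_⟩, hv.2⟩
    rw [mul_comm x, mul_comm y, hv.1.2.2.2.2]

lemma sum_antidiagonal_divisorSum_mul_divisorSum {m r s : ℕ} (hr : r < m) (hs : s < m) (n : ℕ)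
    (F G : ℤ → ℤ → ℤ) :
    ∑ ij ∈ antidiagonal n, divisorSum (fun d x ↦ F d x) (m * ij.1 + r) *
        divisorSum (fun d x ↦ G d x) (m * ij.2 + s) =
      quadSum {v ∈ quads (m * n + r + s) | (v.1 * v.2.2.1 : ZMod m) = r ∧
        (v.2.1 * v.2.2.2 : ZMod m) = s} (fun a b x y ↦ F a x * G b y) := by
  have hmod {t : ℕ} (ht : t < m) (a x : ℕ) : (a * x : ZMod m) = t ↔ a * x % m = t := by
    rw [← Nat.cast_mul, ZMod.natCast_eq_natCast_iff', Nat.mod_eq_of_lt ht]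
  simp only [hmod hr, hmod hs]
  simp only [divisorSum, quadSum, sum_mul_sum, ← sum_product']
  rw [sum_sigma']
  refine sum_nbij' (fun v ↦ (v.2.1.1, v.2.2.1, v.2.1.2, v.2.2.2))
    (fun v ↦ ⟨(v.1 * v.2.2.1 / m, v.2.1 * v.2.2.2 / m), ((v.1, v.2.2.1), (v.2.1, v.2.2.2))⟩)
    ?_ ?_ ?_ (fun _ _ ↦ rfl) (fun _ _ ↦ rfl)
  · rintro ⟨⟨i, j⟩, ⟨a, x⟩, ⟨b, y⟩⟩ hv
    simp only [mem_sigma, mem_product, HasAntidiagonal.mem_antidiagonal,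
      Nat.mem_divisorsAntidiagonal] at hv
    obtain ⟨rfl, ⟨hax, hax0⟩, ⟨hby, hby0⟩⟩ := hv
    rw [← hax, Nat.mul_ne_zero_iff] at hax0
    rw [← hby, Nat.mul_ne_zero_iff] at hby0
    simp only [mem_filter, mem_quads, hax, hby, Nat.mul_add_mod, Nat.mod_eq_of_lt hr,
      Nat.mod_eq_of_lt hs]
    refine ⟨⟨?_, ?_, ?_, ?_, by ring⟩, trivial, trivial⟩ <;> omega
  · rintro ⟨a, b, x, y⟩ hv
    simp only [mem_filter, mem_quads] at hv
    obtain ⟨⟨ha, hb, hx, hy, hn⟩, har, hbs⟩ := hv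
    have hax := Nat.div_add_mod (a * x) m
    have hby := Nat.div_add_mod (b * y) m
    rw [har] at hax
    rw [hbs] at hby
    simp only [mem_sigma, mem_product, HasAntidiagonal.mem_antidiagonal,
      Nat.mem_divisorsAntidiagonal, hax, hby]
    refine ⟨Nat.eq_of_mul_eq_mul_left (by omega : 0 < m) ?_, ⟨trivial, ?_⟩, trivial, ?_⟩
    · rw [mul_add]
      omega
    · positivity
    · positivity
  · rintro ⟨⟨i, j⟩, ⟨a, x⟩, ⟨b, y⟩⟩ hv
    simp only [mem_sigma, mem_product, HasAntidiagonal.mem_antidiagonal,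
      Nat.mem_divisorsAntidiagonal] at hv
    obtain ⟨rfl, ⟨hax, -⟩, ⟨hby, -⟩⟩ := hv
    have hm : 0 < m := by omega
    simp only [hax, hby, Nat.mul_add_div hm, Nat.div_eq_of_lt hr, Nat.div_eq_of_lt hs, add_zero]

end QuadSum

/-- The indicator function of the nonzero multiples of `(1, β, ξ, η)` in `(ℤ/3)⁴`. -/
def line (β ξ η a b x y : ZMod 3) : ℤ :=
  if a ≠ 0 ∧ b = β * a ∧ x = ξ * a ∧ y = η * a then 1 else 0

/-- Both sides differ by the same amount from the full sums over the lines `(1, 0, -1, -1)` and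
`(1, 0, -1, 1)`, which the transposition of `a` and `x` interchanges. -/
lemma quadSum_half_line_eq (n : ℕ) :
    quadSum (halfQuads n) (fun a b x y ↦ line (-1) 1 (-1) a b x y) =
      quadSum (halfQuads n) (fun a b x y ↦ line 0 (-1) 1 a b x y) := by
  have hshear : ∀ a b x y : ZMod 3,
      line 0 (-1) (-1) a (a + b) (x - y) y + line 0 (-1) (-1) (a + b) a y (x - y) =
        line (-1) 1 (-1) a b x y + line 0 (-1) 1 b a y x := by decide
  have hfst : ∀ a x y : ZMod 3, line 0 (-1) (-1) a a x y = 0 := by decide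
  have hsnd : ∀ a b x : ZMod 3, line 0 (-1) 1 a b x x = 0 := by decide
  have htranspose : ∀ a b x y : ZMod 3, line 0 (-1) (-1) a b x y = line 0 (-1) 1 x b a y := by
    decide
  have hsheared := quadSum_eq_half_fst (F := fun a b x y ↦ line 0 (-1) (-1) a b x y)
    (fun a b x y ↦ by push_cast; exact hshear ..) (fun a x y ↦ hfst a x y) n
  have hfolded := quadSum_eq_half_snd (F := fun a b x y ↦ line 0 (-1) 1 a b x y)
    (fun a b x y ↦ rfl) (fun a b x ↦ hsnd a b x) n
  simp only [htranspose] at hsheared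
  rw [quadSum_transpose_fst n (fun a b x y ↦ line 0 (-1) 1 a b x y), hfolded] at hsheared
  simp only [quadSum, sum_add_distrib] at hsheared ⊢
  linarith

lemma quadSum_line_sub_line (n : ℕ) :
    quadSum (quads n) (fun a b x y ↦ line 1 1 1 a b x y - line (-1) 1 (-1) a b x y) =
      quadSum {v ∈ quads n | v.1 = v.2.1} (fun a b x y ↦ line 1 1 1 a b x y) := by
  have hshear : ∀ a b x y : ZMod 3,
      line 1 1 1 a (a + b) (x - y) y + line 1 1 1 (a + b) a y (x - y) =
        2 * line 0 (-1) 1 a b x y := by decide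
  have hfold : ∀ a b x y : ZMod 3, line (-1) 1 (-1) a b x y + line (-1) 1 (-1) b a y x =
      2 * line (-1) 1 (-1) a b x y := by decide
  have hsnd : ∀ a b x : ZMod 3, line (-1) 1 (-1) a b x x = 0 := by decide
  have hsheared := quadSum_eq_half_add_diag_fst (F := fun a b x y ↦ line 1 1 1 a b x y)
    (fun a b x y ↦ by push_cast; exact hshear ..) n
  have hfolded := quadSum_eq_half_snd (F := fun a b x y ↦ line (-1) 1 (-1) a b x y)
    (fun a b x y ↦ hfold a b x y) (fun a b x ↦ hsnd a b x) n
  have hhalf := quadSum_half_line_eq n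
  simp only [quadSum, sum_sub_distrib, ← mul_sum] at hsheared hfolded hhalf ⊢
  linarith

lemma three_mul_card_filter_cast_eq {r : ZMod 3} (hr : r ≠ 0) {c : ℕ} (hc : (c : ZMod 3) ≠ r) :
    3 * (#{a ∈ Ico 1 c | ((a : ℕ) : ZMod 3) = r} : ℤ) = c - χ₃ c := by
  have hcount : #{a ∈ Ico 1 c | ((a : ℕ) : ZMod 3) = r} = c.count (· ≡ r.val [MOD 3]) := by
    rw [Nat.count_eq_card_filter_range]
    congr 1
    ext a
    have hmod : a ≡ r.val [MOD 3] ↔ (a : ZMod 3) = r := by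
      rw [← ZMod.natCast_eq_natCast_iff, ZMod.natCast_zmod_val]
    have hpos : (a : ZMod 3) = r → 1 ≤ a := fun h ↦ Nat.one_le_iff_ne_zero.2 fun h0 ↦ by
      rw [h0, Nat.cast_zero] at h
      exact hr h.symm
    simp only [mem_filter, mem_Ico, mem_range, hmod]
    tauto
  have hχ : ∀ r : ZMod 3, r ≠ 0 → ∀ s < 3, ((s : ℕ) : ZMod 3) ≠ r →
      3 * (if r.val % 3 < s then 1 else 0) = (s : ℤ) - χ₃ s := by decide
  have hres := hχ r hr (c % 3) (Nat.mod_lt _ three_pos) (by rwa [ZMod.natCast_mod])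
  rw [ZMod.natCast_mod] at hres
  rw [hcount, Nat.count_modEq_card _ three_pos]
  push_cast at hres ⊢
  omega

lemma three_mul_quadSum_line_eq_fst {n : ℕ} (hn : (n : ZMod 3) = 2) :
    3 * quadSum {v ∈ quads n | v.1 = v.2.1} (fun a b x y ↦ line 1 1 1 a b x y) =
      sigmaSum n := by
  have hline : ∀ c x a : ZMod 3, c * x = 2 →
      line 1 1 1 x x a (c - a) = if a = x then 1 else 0 := by decide
  have hne : ∀ c x : ZMod 3, c * x = 2 → x ≠ 0 ∧ c ≠ x := by decide
  rw [← sub_zero (sigmaSum n), ← chiSum_eq_zero hn, quadSum_eq_fst]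
  simp only [chiSum, sigmaSum, divisorSum]
  rw [← sum_sub_distrib, mul_sum]
  refine sum_congr rfl fun v hv ↦ ?_
  have hcx : (v.1 : ZMod 3) * v.2 = 2 := by
    rw [← Nat.cast_mul, (Nat.mem_divisorsAntidiagonal.1 hv).1, hn]
  obtain ⟨hx, hc⟩ := hne _ _ hcx
  rw [← three_mul_card_filter_cast_eq hx hc, card_filter]
  push_cast
  simp only [hline _ _ _ hcx]

lemma three_mul_sum_chiSum_mul_chiSum (n : ℕ) :
    3 * ∑ ij ∈ antidiagonal n, chiSum (3 * ij.1 + 1) * chiSum (3 * ij.2 + 1) =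
      sigmaSum (3 * n + 2) := by
  have hline : ∀ a b x y : ZMod 3, (if a * x = 1 ∧ b * y = 1 then χ₃ a * χ₃ b else 0) =
      line 1 1 1 a b x y - line (-1) 1 (-1) a b x y := by decide
  have hconv : ∑ ij ∈ antidiagonal n, chiSum (3 * ij.1 + 1) * chiSum (3 * ij.2 + 1) =
      quadSum (quads (3 * n + 2)) (fun a b x y ↦
        line 1 1 1 a b x y - line (-1) 1 (-1) a b x y) := by
    have h := sum_antidiagonal_divisorSum_mul_divisorSum (m := 3) (r := 1) (s := 1) (by norm_num)
      (by norm_num) n (fun d _ ↦ χ₃ d) (fun d _ ↦ χ₃ d)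
    simp only [quadSum, sum_filter, Nat.cast_one, Int.cast_natCast, hline] at h
    simpa only [quadSum, chiSum, Int.cast_natCast] using h
  rw [hconv, quadSum_line_sub_line, three_mul_quadSum_line_eq_fst]
  push_cast
  rw [show (3 : ZMod 3) = 0 from rfl, zero_mul, zero_add]

lemma quadSum_half_add_mul_line_eq (n : ℕ) :
    quadSum (halfQuads n) (fun a b x y ↦ (a + b) *
        (χ₃ a * line (-1) (-1) (-1) a b x y + χ₃ b * line (-1) (-1) (-1) b a y x)) =
      quadSum (halfQuads n) (fun a b x y ↦
        b * (χ₃ a * (line 0 0 (-1) a b x y - line 0 0 1 a b x y))) := by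
  have hshear_fst : ∀ a b x y : ZMod 3,
      χ₃ a * (line 0 0 (-1) a (a + b) (x - y) y - line 0 0 1 a (a + b) (x - y) y) =
        χ₃ a * line (-1) (-1) (-1) a b x y + χ₃ b * line (-1) (-1) (-1) b a y x := by decide
  have hshear_snd : ∀ a b x y : ZMod 3,
      χ₃ (a + b) * (line 0 0 (-1) (a + b) a y (x - y) - line 0 0 1 (a + b) a y (x - y)) =
        χ₃ b * (line 0 0 (-1) b a y x - line 0 0 1 b a y x) := by decide
  have hfst : ∀ a x y : ZMod 3, line 0 0 (-1) a a x y - line 0 0 1 a a x y = 0 := by decide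
  have hsnd : ∀ a b x : ZMod 3, line 0 0 (-1) a b x x - line 0 0 1 a b x x = 0 := by decide
  have hsheared := quadSum_eq_half_fst
    (F := fun a b x y ↦ b * (χ₃ a * (line 0 0 (-1) a b x y - line 0 0 1 a b x y)))
    (fun a b x y ↦ by push_cast; rw [hshear_fst, hshear_snd])
    (fun a x y ↦ by rw [hfst, mul_zero, mul_zero]) n
  have hfolded := quadSum_eq_half_snd
    (F := fun a b x y ↦ b * (χ₃ a * (line 0 0 (-1) a b x y - line 0 0 1 a b x y)))
    (fun a b x y ↦ rfl) (fun a b x ↦ by rw [hsnd, mul_zero, mul_zero]) n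
  rw [hsheared] at hfolded
  simp only [quadSum, sum_add_distrib] at hfolded ⊢
  linarith

lemma quadSum_sub_mul_line (n : ℕ) :
    quadSum (quads n) (fun a b x y ↦ (a - b) * (χ₃ a * line 1 (-1) 1 a b x y)) =
      quadSum (halfQuads n) (fun a b x y ↦
        b * (χ₃ a * (line 0 0 (-1) a b x y - line 0 0 1 a b x y))) := by
  have hshear_fst : ∀ a b x y : ZMod 3,
      χ₃ a * line 1 (-1) 1 a (a + b) (x - y) y = χ₃ a * line 0 0 1 a b x y := by decide
  have hshear_snd : ∀ a b x y : ZMod 3,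
      χ₃ (a + b) * line 1 (-1) 1 (a + b) a y (x - y) = χ₃ a * line 0 0 (-1) a b x y := by decide
  refine quadSum_eq_half_fst (fun a b x y ↦ ?_) (fun a x y ↦ by rw [sub_self, zero_mul]) n
  push_cast
  rw [hshear_fst, hshear_snd]
  ring

lemma quadSum_mul_line_add_line (n : ℕ) :
    quadSum (quads n) (fun a b x y ↦
        b * (χ₃ a * (line (-1) 1 1 a b x y + line 1 1 (-1) a b x y))) =
      -quadSum {v ∈ quads n | v.2.2.1 = v.2.2.2} (fun a b x y ↦
        (a + b) * (χ₃ a * line (-1) (-1) (-1) a b x y)) := by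
  have hswap_neg : ∀ a b x y : ZMod 3,
      χ₃ a * line (-1) 1 1 a b x y = -(χ₃ b * line (-1) (-1) (-1) b a y x) := by decide
  have hswap_pos : ∀ a b x y : ZMod 3,
      χ₃ a * line 1 1 (-1) a b x y = χ₃ b * line 1 (-1) 1 b a y x := by decide
  have htranspose : ∀ a b x y : ZMod 3,
      χ₃ a * line (-1) (-1) (-1) a b x y = -(χ₃ x * line 1 (-1) 1 x b a y) := by decide
  have hneg := quadSum_swap n (fun a b x y ↦ a * (χ₃ a * line (-1) (-1) (-1) a b x y))
  have hpos := quadSum_swap n (fun a b x y ↦ a * (χ₃ a * line 1 (-1) 1 a b x y))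
  have hcancel : quadSum (quads n) (fun a b x y ↦ b * (χ₃ a * line (-1) (-1) (-1) a b x y)) =
      -quadSum (quads n) (fun a b x y ↦ b * (χ₃ a * line 1 (-1) 1 a b x y)) := by
    rw [← quadSum_transpose_fst n (fun a b x y ↦ b * (χ₃ a * line 1 (-1) 1 a b x y))]
    simp only [htranspose, mul_neg, quadSum, sum_neg_distrib]
  have hfolded := quadSum_eq_half_add_diag_snd
    (F := fun a b x y ↦ (a + b) * (χ₃ a * line (-1) (-1) (-1) a b x y))
    (fun a b x y ↦ by rw [add_comm b a, ← mul_add]) n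
  rw [quadSum_half_add_mul_line_eq, ← quadSum_sub_mul_line] at hfolded
  simp only [hswap_neg, hswap_pos, quadSum, mul_add, add_mul, sub_mul, sum_add_distrib,
    sum_sub_distrib, mul_neg, sum_neg_distrib] at hneg hpos hcancel hfolded ⊢
  linarith

lemma sum_Ico_mul_line (c x : ℕ) :
    ∑ a ∈ Ico 1 c, χ₃ a * line (-1) (-1) (-1) a (c - a) x x =
      if 3 ∣ c then -(((c / 3 : ℕ) : ℤ) * χ₃ x) else 0 := by
  have hline : ∀ a c x : ZMod 3, χ₃ a * line (-1) (-1) (-1) a (c - a) x x =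
      if c = 0 then (if a = -x then -χ₃ x else 0) else 0 := by decide
  simp only [hline, ZMod.natCast_eq_zero_iff]
  split_ifs with hc
  · rw [← sum_filter, sum_const, nsmul_eq_mul]
    by_cases hx : (x : ZMod 3) = 0
    · simp only [hx, show χ₃ 0 = 0 from rfl, neg_zero, mul_zero]
    · have hc0 := (ZMod.natCast_eq_zero_iff c 3).2 hc
      have hcard := three_mul_card_filter_cast_eq (neg_ne_zero.2 hx)
        (by rw [hc0]; exact (neg_ne_zero.2 hx).symm)
      rw [hc0, show χ₃ 0 = 0 from rfl, sub_zero] at hcard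
      rw [show #{a ∈ Ico 1 c | ((a : ℕ) : ZMod 3) = -x} = c / 3 by omega, mul_neg]
  · exact sum_const_zero

lemma quadSum_add_mul_line_eq_snd (K : ℕ) :
    quadSum {v ∈ quads (3 * K) | v.2.2.1 = v.2.2.2} (fun a b x y ↦
        (a + b) * (χ₃ a * line (-1) (-1) (-1) a b x y)) = -(3 * squareChiSum K) := by
  rw [quadSum_eq_snd]
  push_cast
  simp only [add_sub_cancel, ← mul_sum, sum_Ico_mul_line, mul_ite, mul_zero]
  rw [divisorSum_filter_dvd_fst three_pos, ← neg_mul, squareChiSum, ← divisorSum_const_mul]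
  simp only [Nat.mul_div_cancel_left _ three_pos]
  push_cast
  ring_nf

lemma sum_chiSum_mul_sigmaSum (n : ℕ) :
    ∑ ij ∈ antidiagonal n, chiSum (3 * ij.1 + 1) * sigmaSum (3 * ij.2 + 2) =
      3 * squareChiSum (n + 1) := by
  have hline : ∀ a b x y : ZMod 3, (if a * x = 1 ∧ b * y = 2 then χ₃ a else 0) =
      χ₃ a * (line (-1) 1 1 a b x y + line 1 1 (-1) a b x y) := by decide
  have hconv : ∑ ij ∈ antidiagonal n, chiSum (3 * ij.1 + 1) * sigmaSum (3 * ij.2 + 2) =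
      quadSum (quads (3 * (n + 1))) (fun a b x y ↦
        b * (χ₃ a * (line (-1) 1 1 a b x y + line 1 1 (-1) a b x y))) := by
    have h := sum_antidiagonal_divisorSum_mul_divisorSum (m := 3) (r := 1) (s := 2) (by norm_num)
      (by norm_num) n (fun d _ ↦ χ₃ d) (fun d _ ↦ d)
    simp only [quadSum, sum_filter, Nat.cast_one, Nat.cast_ofNat, Int.cast_natCast, ← ite_zero_mul,
      hline] at h
    rw [show 3 * (n + 1) = 3 * n + 1 + 2 by ring]
    simpa only [quadSum, chiSum, sigmaSum, Int.cast_natCast, mul_comm] using h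
  rw [hconv, quadSum_mul_line_add_line, quadSum_add_mul_line_eq_snd, neg_neg]

lemma sum_chiSum_mul_sum_chiSum_mul_chiSum (n : ℕ) :
    ∑ ij ∈ antidiagonal n, chiSum (3 * ij.1 + 1) *
        ∑ kl ∈ antidiagonal ij.2, chiSum (3 * kl.1 + 1) * chiSum (3 * kl.2 + 1) =
      squareChiSum (n + 1) := by
  refine mul_left_cancel₀ three_ne_zero ?_
  rw [← sum_chiSum_mul_sigmaSum, mul_sum]
  simp only [← three_mul_sum_chiSum_mul_chiSum]
  exact sum_congr rfl fun _ _ ↦ mul_left_comm ..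

lemma ncard_eq_mul_ncard_of_existsUnique_pow_mem {α : Type*} (e : Equiv.Perm α) {S A : Set α}
    (hA : A.Finite) (hAS : A ⊆ S) (heS : ∀ z, e z ∈ S → z ∈ S) {m : ℕ}
    (hunique : ∀ z ∈ S, ∃! k, k < m ∧ (e ^ k) z ∈ A) : S.ncard = m * A.ncard := by
  classical
  have hpow : ∀ k z, (e ^ k) z ∈ S → z ∈ S := by
    intro k
    induction k with
    | zero => exact fun _ h ↦ h
    | succ k ih => exact fun z h ↦ ih z (heS _ (by rwa [pow_succ'] at h))
  let T (k : ℕ) : Finset α := hA.toFinset.map (e ^ k).symm.toEmbedding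
  have hT (k : ℕ) (z : α) : z ∈ T k ↔ (e ^ k) z ∈ A := by
    rw [mem_map_equiv, Equiv.symm_symm, Set.Finite.mem_toFinset]
  have hS : S = ((range m).biUnion T : Finset α) := by
    ext z
    simp only [coe_biUnion, coe_range, Set.mem_iUnion, mem_coe, hT, Set.mem_Iio, exists_prop]
    exact ⟨fun hz ↦ (hunique z hz).exists, fun ⟨k, _, hk⟩ ↦ hpow k z (hAS hk)⟩
  have hdisj : (range m : Set ℕ).PairwiseDisjoint T := by
    intro j hj k hk hjk
    refine disjoint_left.2 fun z hzj hzk ↦ hjk ?_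
    rw [hT] at hzj hzk
    exact (hunique z (hpow j z (hAS hzj))).unique ⟨mem_range.1 hj, hzj⟩ ⟨mem_range.1 hk, hzk⟩
  rw [hS, Set.ncard_coe_finset, card_biUnion hdisj]
  simp [T, Set.ncard_eq_toFinset_card A hA]

/-- The ring of Eisenstein integers `ℤ[ω]`. Here `ω` is a primitive sixth root of unity, so that
the norm form is `x² + xy + y²`. -/
abbrev EisensteinInt : Type := QuadraticAlgebra ℤ (-1) 1

namespace EisensteinInt

open QuadraticAlgebra

lemma norm_eq (z : EisensteinInt) : z.norm = z.re ^ 2 + z.re * z.im + z.im ^ 2 := by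
  rw [norm_def]
  ring

lemma four_mul_norm (z : EisensteinInt) : 4 * z.norm = (2 * z.re + z.im) ^ 2 + 3 * z.im ^ 2 := by
  rw [norm_eq]
  ring

lemma norm_nonneg (z : EisensteinInt) : 0 ≤ z.norm := by
  nlinarith [four_mul_norm z]

lemma norm_eq_zero_iff {z : EisensteinInt} : z.norm = 0 ↔ z = 0 := by
  refine ⟨fun h ↦ ?_, fun h ↦ by rw [h, QuadraticAlgebra.norm_zero]⟩
  have him : z.im = 0 := by nlinarith [four_mul_norm z]
  have hre : z.re = 0 := by nlinarith [four_mul_norm z]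
  exact QuadraticAlgebra.ext hre him

lemma norm_pos {z : EisensteinInt} (hz : z ≠ 0) : 0 < z.norm :=
  (norm_nonneg z).lt_of_ne' (mt norm_eq_zero_iff.1 hz)

/-- The quotient `z / w` with both coordinates rounded to a nearest integer; this is the division
of the Euclidean algorithm. -/
def roundedQuotient (z w : EisensteinInt) : EisensteinInt :=
  ⟨Int.bdiv (z * star w).re w.norm.natAbs, Int.bdiv (z * star w).im w.norm.natAbs⟩

lemma sub_mul_roundedQuotient_mul_star (z w : EisensteinInt) :
    (z - w * roundedQuotient z w) * star w =
      ⟨(z * star w).re.bmod w.norm.natAbs, (z * star w).im.bmod w.norm.natAbs⟩ := by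
  have hmul : (z - w * roundedQuotient z w) * star w =
      z * star w - algebraMap ℤ _ (w.norm.natAbs : ℤ) * roundedQuotient z w := by
    rw [Int.natAbs_of_nonneg (norm_nonneg w), algebraMap_norm_eq_mul_star]
    ring
  rw [hmul]
  ext <;> simp [roundedQuotient, Int.bmod_eq_self_sub_mul_bdiv]

-- Rounding errors have coordinates at most `1/2`, hence norm at most `3/4`.
lemma norm_sub_mul_roundedQuotient_lt (z : EisensteinInt) {w : EisensteinInt} (hw : w ≠ 0) :
    (z - w * roundedQuotient z w).norm < w.norm := by
  have hpos := norm_pos hw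
  obtain ⟨m, hm⟩ := Int.eq_ofNat_of_zero_le hpos.le
  have hm0 : 0 < m := by lia
  have hmul := congrArg QuadraticAlgebra.norm (sub_mul_roundedQuotient_mul_star z w)
  rw [map_mul, QuadraticAlgebra.norm_star, hm, Int.natAbs_natCast] at hmul
  have hbound (x : ℤ) : -(m : ℤ) ≤ 2 * x.bmod m ∧ 2 * x.bmod m ≤ m := by
    have := Int.le_bmod (x := x) hm0
    have := Int.bmod_lt (x := x) hm0
    lia
  have hre := hbound (z * star w).re
  have him := hbound (z * star w).im
  rw [hm]
  generalize (z * star w).re.bmod m = x at *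
  generalize (z * star w).im.bmod m = y at *
  rw [norm_eq ⟨x, y⟩] at hmul
  nlinarith

instance : EuclideanDomain EisensteinInt where
  quotient := roundedQuotient
  quotient_zero z := by simp [roundedQuotient, Int.bdiv]; rfl
  remainder z w := z - w * roundedQuotient z w
  quotient_mul_add_remainder_eq z w := add_sub_cancel _ _
  r z w := z.norm.natAbs < w.norm.natAbs
  r_wellFounded := (measure fun z : EisensteinInt ↦ z.norm.natAbs).wf
  remainder_lt z _ hw :=
    Int.natAbs_lt_natAbs_of_nonneg_of_lt (norm_nonneg _) (norm_sub_mul_roundedQuotient_lt z hw)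
  mul_left_not_lt z w hw := by
    rw [map_mul, Int.natAbs_mul, not_lt]
    exact Nat.le_mul_of_pos_right _ (Int.natAbs_pos.2 (norm_pos hw).ne')

lemma isUnit_iff_norm_eq_one {z : EisensteinInt} : IsUnit z ↔ z.norm = 1 := by
  have := norm_nonneg z
  rw [isUnit_iff_norm_isUnit, Int.isUnit_iff]
  lia

lemma natCast_dvd_iff {n : ℕ} {z : EisensteinInt} :
    (n : EisensteinInt) ∣ z ↔ (n : ℤ) ∣ z.re ∧ (n : ℤ) ∣ z.im := by
  rw [← algebraMap_dvd_iff]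
  simp

lemma dvd_star_iff {z w : EisensteinInt} : w ∣ star z ↔ star w ∣ z := by
  have star_dvd {a b : EisensteinInt} (h : a ∣ b) : star a ∣ star b := map_dvd (starRingEnd _) h
  exact ⟨fun h ↦ star_star z ▸ star_dvd h, fun h ↦ star_star w ▸ star_dvd h⟩

lemma prime_of_prime_norm {p : ℕ} (hp : p.Prime) {w : EisensteinInt} (hw : w.norm = p) :
    Prime w := by
  rw [← irreducible_iff_prime]
  refine ⟨fun h ↦ hp.ne_one ?_, fun a b hab ↦ ?_⟩
  · rw [isUnit_iff_norm_eq_one, hw] at h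
    exact_mod_cast h
  · rw [isUnit_iff_norm_isUnit, isUnit_iff_norm_isUnit]
    have hirr := (Nat.prime_iff_prime_int.1 hp).irreducible
    exact hirr.isUnit_or_isUnit (by rw [← hw, hab, map_mul])

lemma exists_norm_eq_of_not_prime {p : ℕ} (hp : p.Prime) (h : ¬ Prime (p : EisensteinInt)) :
    ∃ w : EisensteinInt, w.norm = p := by
  have hunit : ¬ IsUnit (p : EisensteinInt) := by
    rw [isUnit_iff_norm_eq_one, QuadraticAlgebra.norm_natCast]
    exact_mod_cast (Nat.one_lt_pow two_ne_zero hp.one_lt).ne'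
  rw [← irreducible_iff_prime, irreducible_iff] at h
  push Not at h
  obtain ⟨a, b, hab, ha, hb⟩ := h hunit
  have hnorm : a.norm.natAbs * b.norm.natAbs = p ^ 2 := by
    rw [← Int.natAbs_mul, ← map_mul, ← hab, QuadraticAlgebra.norm_natCast, Int.natAbs_pow,
      Int.natAbs_natCast]
  rw [isUnit_iff_norm_eq_one] at ha hb
  have := norm_nonneg a
  have := norm_nonneg b
  have := (hp.mul_eq_prime_sq_iff (by lia) (by lia)).1 hnorm
  exact ⟨a, by lia⟩

/-- The Eisenstein integers of norm `N`. -/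
def normSet (N : ℕ) : Set EisensteinInt := {z | z.norm = N}

lemma finite_normSet (N : ℕ) : (normSet N).Finite := by
  let box := Set.Icc (-(2 * N) : ℤ) (2 * N) ×ˢ Set.Icc (-(2 * N) : ℤ) (2 * N)
  have hsub : normSet N ⊆ equivProd (-1) 1 ⁻¹' box := by
    intro z (hz : z.norm = N)
    have hre : 4 * z.norm = (z.re + 2 * z.im) ^ 2 + 3 * z.re ^ 2 := by
      rw [norm_eq]
      ring
    have hre' : |z.re| ≤ 2 * N := by
      nlinarith [Int.le_self_sq |z.re|, sq_abs z.re, sq_nonneg (z.re + 2 * z.im)]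
    have him' : |z.im| ≤ 2 * N := by
      nlinarith [Int.le_self_sq |z.im|, sq_abs z.im, four_mul_norm z]
    exact ⟨abs_le.1 hre', abs_le.1 him'⟩
  have hbox : box.Finite := (Set.finite_Icc _ _).prod (Set.finite_Icc _ _)
  exact (hbox.preimage (Equiv.injective _).injOn).subset hsub

lemma ncard_normSet_mul_inter_dvd {w : EisensteinInt} {m : ℕ} (hm : m ≠ 0) (hw : w.norm = m)
    (N : ℕ) : (normSet (m * N) ∩ {z | w ∣ z}).ncard = (normSet N).ncard := by
  have himage : normSet (m * N) ∩ {z | w ∣ z} = (w * ·) '' normSet N := by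
    ext z
    constructor
    · rintro ⟨hz, a, rfl⟩
      refine ⟨a, ?_, rfl⟩
      simp only [normSet, Set.mem_ofPred_eq, map_mul, hw, Nat.cast_mul] at hz ⊢
      exact mul_left_cancel₀ (Nat.cast_ne_zero.2 hm) hz
    · rintro ⟨a, ha, rfl⟩
      refine ⟨?_, dvd_mul_right w a⟩
      simp only [normSet, Set.mem_ofPred_eq, map_mul, hw, Nat.cast_mul] at ha ⊢
      rw [ha]
  have hw0 : w ≠ 0 := fun h ↦ hm (by simpa [h] using hw.symm)
  rw [himage, Set.ncard_image_of_injective _ (mul_right_injective₀ hw0)]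

lemma ncard_normSet_mul_inter_natCast_dvd {p : ℕ} (hp : 0 < p) (K : ℕ) :
    (normSet (p * K) ∩ {z | (p : EisensteinInt) ∣ z}).ncard =
      if p ∣ K then (normSet (K / p)).ncard else 0 := by
  have hnorm : QuadraticAlgebra.norm (p : EisensteinInt) = (p ^ 2 : ℕ) := by simp
  split_ifs with hdvd
  · obtain ⟨L, rfl⟩ := hdvd
    rw [Nat.mul_div_cancel_left _ hp, ← mul_assoc, ← sq,
      ncard_normSet_mul_inter_dvd (pow_pos hp 2).ne' hnorm]
  · rw [Set.ncard_eq_zero ((finite_normSet _).inter_of_left _), Set.eq_empty_iff_forall_notMem]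
    rintro _ ⟨hz, a, rfl⟩
    simp only [normSet, Set.mem_ofPred_eq, map_mul, hnorm] at hz
    refine hdvd (Int.natCast_dvd_natCast.1 ⟨a.norm, ?_⟩)
    refine mul_left_cancel₀ (Nat.cast_ne_zero.2 hp.ne' : (p : ℤ) ≠ 0) ?_
    push_cast at hz
    linear_combination -hz

lemma norm_emod_three_ne_two (z : EisensteinInt) : z.norm % 3 ≠ 2 := by
  have hz : z.norm = (z.re - z.im) ^ 2 + 3 * (z.re * z.im) := by
    rw [norm_eq]
    ring
  have hsq : (z.re - z.im) ^ 2 % 3 = 0 ∨ (z.re - z.im) ^ 2 % 3 = 1 := by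
    rw [sq, Int.mul_emod]
    have h : (z.re - z.im) % 3 = 0 ∨ (z.re - z.im) % 3 = 1 ∨ (z.re - z.im) % 3 = 2 := by lia
    rcases h with h | h | h <;> simp [h]
  lia

lemma natCast_prime_of_mod_three_eq_two {p : ℕ} (hp : p.Prime) (hp3 : p % 3 = 2) :
    Prime (p : EisensteinInt) := by
  by_contra h
  obtain ⟨w, hw⟩ := exists_norm_eq_of_not_prime hp h
  have := norm_emod_three_ne_two w
  lia

lemma exists_dvd_sq_add_add_one {p : ℕ} (hp : p.Prime) (hp3 : p % 3 = 1) :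
    ∃ t : ℤ, (p : ℤ) ∣ t ^ 2 + t + 1 := by
  have := Fact.mk hp
  have hcard : 3 ∣ Fintype.card (ZMod p)ˣ := by
    rw [ZMod.card_units]
    lia
  obtain ⟨g, hg⟩ := exists_prime_orderOf_dvd_card 3 hcard
  have hprim : IsPrimitiveRoot (g : ZMod p) 3 := hg ▸ orderOf_units (y := g) ▸ .orderOf _
  have hroot := hprim.geom_sum_eq_zero (by norm_num)
  obtain ⟨t, ht⟩ := ZMod.intCast_surjective (g : ZMod p)
  refine ⟨t, (ZMod.intCast_zmod_eq_zero_iff_dvd _ p).1 ?_⟩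
  push_cast
  rw [ht, ← hroot, sum_range_succ, sum_range_succ, sum_range_one]
  ring

lemma exists_norm_eq_of_mod_three_eq_one {p : ℕ} (hp : p.Prime) (hp3 : p % 3 = 1) :
    ∃ w : EisensteinInt, w.norm = p := by
  obtain ⟨t, ht⟩ := exists_dvd_sq_add_add_one hp hp3
  refine exists_norm_eq_of_not_prime hp fun hprime ↦ ?_
  have hdvd : (p : EisensteinInt) ∣ ⟨t, 1⟩ * star ⟨t, 1⟩ := by
    rw [← algebraMap_norm_eq_mul_star, norm_eq, natCast_dvd_iff, algebraMap_re, algebraMap_im]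
    simpa using ht
  have hp1 : ¬ (p : ℤ) ∣ 1 := (Nat.prime_iff_prime_int.1 hp).not_dvd_one
  rcases hprime.dvd_or_dvd hdvd with h | h
  · exact hp1 (natCast_dvd_iff.1 h).2
  · exact hp1 ((dvd_neg).1 (natCast_dvd_iff.1 h).2)

lemma dvd_or_star_dvd {w : EisensteinInt} (hw : Prime w) {p K : ℕ} (hwp : w ∣ p)
    {z : EisensteinInt} (hz : z ∈ normSet (p * K)) : w ∣ z ∨ star w ∣ z := by
  rw [← dvd_star_iff]
  refine hw.dvd_or_dvd ?_
  have hnorm : z * star z = (p : EisensteinInt) * K := by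
    rw [← algebraMap_norm_eq_mul_star, show z.norm = _ from hz]
    simp
  exact hnorm ▸ hwp.mul_right _

lemma ncard_normSet_mul_of_mod_three_eq_two {p : ℕ} (hp : p.Prime) (hp3 : p % 3 = 2) (K : ℕ) :
    (normSet (p * K)).ncard = if p ∣ K then (normSet (K / p)).ncard else 0 := by
  rw [← ncard_normSet_mul_inter_natCast_dvd hp.pos, Set.inter_eq_left.2]
  intro z hz
  have := dvd_or_star_dvd (natCast_prime_of_mod_three_eq_two hp hp3) dvd_rfl hz
  rwa [star_natCast, or_self] at this

lemma ncard_normSet_three_mul (K : ℕ) : (normSet (3 * K)).ncard = (normSet K).ncard := by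
  have hnorm : QuadraticAlgebra.norm (⟨1, 1⟩ : EisensteinInt) = (3 : ℕ) := by simp [norm_eq]
  have hstar : star (⟨1, 1⟩ : EisensteinInt) = ⟨1, 1⟩ * ⟨1, -1⟩ := rfl
  have hdvd : (⟨1, 1⟩ : EisensteinInt) ∣ (3 : ℕ) := ⟨⟨2, -1⟩, rfl⟩
  rw [← ncard_normSet_mul_inter_dvd three_ne_zero hnorm K, Set.inter_eq_left.2]
  intro z hz
  rcases dvd_or_star_dvd (prime_of_prime_norm Nat.prime_three hnorm) hdvd hz with h | h
  · exact h
  · exact (hstar ▸ dvd_mul_right _ _).trans h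

lemma not_star_dvd_self {w : EisensteinInt} {p : ℕ} (hp : p.Prime) (hp3 : p % 3 = 1)
    (hw : w.norm = p) : ¬ star w ∣ w := by
  intro h
  have hpZ := Nat.prime_iff_prime_int.1 hp
  have hnorm := hw ▸ four_mul_norm w
  have htrace : (p : ℤ) ∣ 2 * w.re + w.im := by
    have hadd : star w ∣ algebraMap ℤ _ (2 * w.re + w.im) := by
      have : algebraMap ℤ EisensteinInt (2 * w.re + w.im) = w + star w := by
        ext
        · simp; ring
        · simp
      exact this ▸ dvd_add h dvd_rfl
    refine hpZ.dvd_of_dvd_pow (n := 2) ?_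
    have := map_dvd QuadraticAlgebra.norm hadd
    rwa [QuadraticAlgebra.norm_star, hw, QuadraticAlgebra.norm_algebraMap] at this
  obtain ⟨s, hs⟩ := htrace
  have him : (p : ℤ) ∣ w.im := by
    have hdvd : (p : ℤ) ∣ 3 * w.im ^ 2 := ⟨4 - p * s ^ 2, by rw [hs] at hnorm; linarith⟩
    refine hpZ.dvd_of_dvd_pow (n := 2) ((hpZ.dvd_or_dvd hdvd).resolve_left fun h3 ↦ ?_)
    have := (Nat.prime_dvd_prime_iff_eq hp Nat.prime_three).1 (mod_cast h3)
    lia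
  obtain ⟨r, hr⟩ := him
  have hfour : (p : ℤ) ∣ 4 := by
    refine ⟨s ^ 2 + 3 * r ^ 2, mul_left_cancel₀ hpZ.ne_zero ?_⟩
    rw [hs, hr] at hnorm
    linarith
  have := (Nat.prime_dvd_prime_iff_eq hp Nat.prime_two).1
    (hp.dvd_of_dvd_pow (n := 2) (by exact_mod_cast hfour))
  lia

lemma ncard_normSet_mul_of_mod_three_eq_one {p : ℕ} (hp : p.Prime) (hp3 : p % 3 = 1) (K : ℕ) :
    (normSet (p * K)).ncard + (if p ∣ K then (normSet (K / p)).ncard else 0) =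
      2 * (normSet K).ncard := by
  obtain ⟨w, hw⟩ := exists_norm_eq_of_mod_three_eq_one hp hp3
  have hw' : (star w).norm = p := by rw [QuadraticAlgebra.norm_star, hw]
  have hmul : w * star w = p := by
    rw [← algebraMap_norm_eq_mul_star, hw]
    simp
  have hprime := prime_of_prime_norm hp hw
  have hprime' := prime_of_prime_norm hp hw'
  have hunion : normSet (p * K) ∩ {z | w ∣ z} ∪ normSet (p * K) ∩ {z | star w ∣ z} =
      normSet (p * K) := by
    rw [← Set.inter_union_distrib_left, Set.inter_eq_left]
    exact fun z hz ↦ dvd_or_star_dvd hprime (hmul ▸ dvd_mul_right _ _) hz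
  have hinter : normSet (p * K) ∩ {z | w ∣ z} ∩ (normSet (p * K) ∩ {z | star w ∣ z}) =
      normSet (p * K) ∩ {z | (p : EisensteinInt) ∣ z} := by
    rw [← Set.inter_inter_distrib_left]
    congr 1
    ext z
    refine ⟨fun ⟨⟨a, ha⟩, hz⟩ ↦ ?_, fun h ↦ ⟨?_, ?_⟩⟩
    · obtain ⟨b, rfl⟩ := (hprime'.dvd_or_dvd (ha ▸ hz)).resolve_left (not_star_dvd_self hp hp3 hw)
      exact ⟨b, by rw [ha, ← hmul, mul_assoc]⟩
    · exact (hmul ▸ dvd_mul_right _ _ : w ∣ p).trans h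
    · exact (hmul ▸ dvd_mul_left _ _ : star w ∣ p).trans h
  rw [← ncard_normSet_mul_inter_natCast_dvd hp.pos, ← hinter]
  nth_rw 1 [← hunion]
  rw [Set.ncard_union_add_ncard_inter _ _ ((finite_normSet _).inter_of_left _)
    ((finite_normSet _).inter_of_left _), ncard_normSet_mul_inter_dvd hp.ne_zero hw,
    ncard_normSet_mul_inter_dvd hp.ne_zero hw', two_mul]

lemma ncard_normSet_one : (normSet 1).ncard = 6 := by
  have hset : normSet 1 =
      ({⟨1, 0⟩, ⟨0, 1⟩, ⟨-1, 1⟩, ⟨-1, 0⟩, ⟨0, -1⟩, ⟨1, -1⟩} : Finset EisensteinInt) := by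
    ext ⟨x, y⟩
    refine ⟨fun h ↦ ?_, fun h ↦ ?_⟩
    · replace h : x ^ 2 + x * y + y ^ 2 = 1 := (norm_eq _).symm.trans h
      have hx : -1 ≤ x ∧ x ≤ 1 := by constructor <;> nlinarith [sq_nonneg (x + 2 * y)]
      have hy : -1 ≤ y ∧ y ≤ 1 := by constructor <;> nlinarith [sq_nonneg (2 * x + y)]
      obtain ⟨hx₁, hx₂⟩ := hx
      obtain ⟨hy₁, hy₂⟩ := hy
      interval_cases x <;> interval_cases y <;> simp_all
    · simp only [coe_insert, coe_singleton, Set.mem_insert_iff, Set.mem_singleton_iff] at h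
      rcases h with h | h | h | h | h | h <;> rw [h] <;> rfl
  rw [hset, Set.ncard_coe_finset]
  rfl

lemma ncard_normSet_prime_mul {p : ℕ} (hp : p.Prime) (K : ℕ) :
    ((normSet (p * K)).ncard : ℤ) =
      (χ₃ p + 1) * (normSet K).ncard - if p ∣ K then χ₃ p * (normSet (K / p)).ncard else 0 := by
  have hχ {r : ℕ} (h : p % 3 = r % 3) : χ₃ p = χ₃ r :=
    congrArg χ₃ ((ZMod.natCast_eq_natCast_iff' p r 3).2 h)
  have hmod : p % 3 = 0 ∨ p % 3 = 1 ∨ p % 3 = 2 := by lia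
  rcases hmod with h | h | h
  · obtain rfl : 3 = p :=
      (Nat.prime_dvd_prime_iff_eq Nat.prime_three hp).1 (Nat.dvd_of_mod_eq_zero h)
    rw [ncard_normSet_three_mul, hχ (r := 0) h, show χ₃ ((0 : ℕ) : ZMod 3) = 0 from rfl]
    simp
  · have hrec := congrArg (Nat.cast (R := ℤ)) (ncard_normSet_mul_of_mod_three_eq_one hp h K)
    rw [hχ (r := 1) h, show χ₃ ((1 : ℕ) : ZMod 3) = 1 from rfl]
    push_cast at hrec
    simp only [one_mul]
    linear_combination hrec
  · rw [ncard_normSet_mul_of_mod_three_eq_two hp h, hχ (r := 2) h,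
      show χ₃ ((2 : ℕ) : ZMod 3) = -1 from rfl]
    split_ifs <;> simp

theorem ncard_normSet {N : ℕ} (hN : N ≠ 0) : ((normSet N).ncard : ℤ) = 6 * chiSum N := by
  induction N using Nat.strong_induction_on with | _ N ih
  obtain rfl | hN1 := eq_or_ne N 1
  · simp [ncard_normSet_one, chiSum, divisorSum]
  obtain ⟨p, hp, K, rfl⟩ := Nat.exists_prime_and_dvd hN1
  have hK : K ≠ 0 := right_ne_zero_of_mul hN
  have hlt : K < p * K := lt_mul_of_one_lt_left (Nat.pos_of_ne_zero hK) hp.one_lt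
  rw [ncard_normSet_prime_mul hp, chiSum_prime_mul hp, ih K hlt hK]
  split_ifs with hdvd
  · have hdiv : K / p ≠ 0 := (Nat.div_ne_zero_iff_of_dvd hdvd).2 ⟨hK, hp.ne_zero⟩
    rw [ih _ ((Nat.div_le_self K p).trans_lt hlt) hdiv]
    ring
  · ring

/-- Multiplication by the sixth root of unity `ω`. -/
def rotation : Equiv.Perm EisensteinInt where
  toFun z := ⟨-z.im, z.re + z.im⟩
  invFun z := ⟨z.re + z.im, -z.re⟩
  left_inv z := by ext <;> simp
  right_inv z := by ext <;> simp

lemma rotation_apply (z : EisensteinInt) : rotation z = ⟨-z.im, z.re + z.im⟩ := rfl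

lemma norm_rotation (z : EisensteinInt) : (rotation z).norm = z.norm := by
  rw [norm_eq, norm_eq, rotation_apply]
  ring

/-- The Eisenstein integers `≡ 1` modulo `√-3` in an open sector of angle `2π/3`. It contains one
associate of every Eisenstein integer of norm prime to 3. -/
def primarySector : Set EisensteinInt :=
  {z | (z.re - z.im) % 3 = 1 ∧ 0 < z.re + 2 * z.im ∧ 0 < 2 * z.re + z.im}

lemma existsUnique_rotation_pow_mem_primarySector {z : EisensteinInt}
    (hz : (z.re - z.im) % 3 ≠ 0) : ∃! k, k < 6 ∧ (rotation ^ k) z ∈ primarySector := by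
  obtain ⟨x, y⟩ := z
  have hrot (k : Fin 6) : (rotation ^ (k : ℕ)) ⟨x, y⟩ =
      ![⟨x, y⟩, ⟨-y, x + y⟩, ⟨-x - y, x⟩, ⟨-x, -y⟩, ⟨y, -x - y⟩, ⟨x + y, -x⟩] k := by
    fin_cases k <;> ext <;> simp [pow_succ, rotation_apply] <;> ring
  have hexists : ∃ k : Fin 6, (rotation ^ (k : ℕ)) ⟨x, y⟩ ∈ primarySector := by
    by_contra! hnot
    obtain hres | hres : (x - y) % 3 = 1 ∨ (x - y) % 3 = 2 := by dsimp only at hz; omega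
    · have h₀ := hrot 0 ▸ hnot 0
      have h₂ := hrot 2 ▸ hnot 2
      have h₄ := hrot 4 ▸ hnot 4
      simp only [primarySector, Matrix.cons_val, Set.mem_ofPred_eq] at h₀ h₂ h₄
      omega
    · have h₁ := hrot 1 ▸ hnot 1
      have h₃ := hrot 3 ▸ hnot 3
      have h₅ := hrot 5 ▸ hnot 5
      simp only [primarySector, Matrix.cons_val, Set.mem_ofPred_eq] at h₁ h₃ h₅
      omega
  obtain ⟨i, hi⟩ := hexists
  refine existsUnique_of_exists_of_unique ⟨i, i.isLt, hi⟩ ?_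
  rintro j k ⟨hj, hj'⟩ ⟨hk, hk'⟩
  lift j to Fin 6 using hj
  lift k to Fin 6 using hk
  rw [hrot] at hj' hk'
  fin_cases j <;> fin_cases k <;> simp [primarySector] at hz hj' hk' ⊢ <;> omega

lemma ncard_normSet_eq_six_mul (n : ℕ) :
    (normSet (3 * n + 1)).ncard = 6 * (normSet (3 * n + 1) ∩ primarySector).ncard := by
  refine ncard_eq_mul_ncard_of_existsUnique_pow_mem rotation
    ((finite_normSet _).inter_of_left _) Set.inter_subset_left
    (fun z hz ↦ (norm_rotation z).symm.trans hz) fun z hz ↦ ?_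
  have hpow (k : ℕ) : (rotation ^ k) z ∈ normSet (3 * n + 1) := by
    induction k with
    | zero => exact hz
    | succ k ih => exact pow_succ' rotation k ▸ (norm_rotation _).trans ih
  simp only [Set.mem_inter_iff, hpow, true_and]
  refine existsUnique_rotation_pow_mem_primarySector fun hmod ↦ ?_
  have hnorm : z.norm = (z.re - z.im) ^ 2 + 3 * (z.re * z.im) := by
    rw [norm_eq]
    ring
  rw [show z.norm = _ from hz] at hnorm
  obtain ⟨c, hc⟩ := Int.dvd_of_emod_eq_zero hmod
  rw [hc] at hnorm
  push_cast at hnorm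
  lia

end EisensteinInt

section BetaSet

variable (μ : YoungDiagram)

/-- The first-column hook length of the row `i`, for `i < μ.colLen 0`. -/
def bead (i : ℕ) : ℕ := μ.rowLen i + (μ.colLen 0 - 1 - i)

/-- The beta set of a partition: the set of hook lengths in its first column. -/
def betaSet : Finset ℕ := (range (μ.colLen 0)).image (bead μ)

/-- The `j`-th element of the complement of the beta set, see `range_gap`. -/
def gap (j : ℕ) : ℕ := j + (μ.colLen 0 - μ.colLen j)

variable {μ}

lemma lt_rowLen_iff_lt_colLen {i j : ℕ} : j < μ.rowLen i ↔ i < μ.colLen j := by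
  rw [← YoungDiagram.mem_iff_lt_rowLen, ← YoungDiagram.mem_iff_lt_colLen]

lemma bead_mem_betaSet {i : ℕ} (hi : i < μ.colLen 0) : bead μ i ∈ betaSet μ :=
  mem_image_of_mem _ (mem_range.2 hi)

variable (μ)

lemma zero_notMem_betaSet : 0 ∉ betaSet μ := by
  simp only [betaSet, mem_image, mem_range, not_exists, not_and]
  intro i hi
  have := lt_rowLen_iff_lt_colLen.2 hi
  rw [bead]
  lia

lemma injOn_bead : Set.InjOn (bead μ) (range (μ.colLen 0)) := by
  refine StrictAntiOn.injOn fun i _ i' hi' hlt ↦ ?_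
  have := μ.rowLen_anti i i' hlt.le
  simp only [coe_range, Set.mem_Iio] at hi'
  simp only [bead]
  lia

lemma card_betaSet : #(betaSet μ) = μ.colLen 0 := by
  rw [betaSet, card_image_of_injOn (injOn_bead μ), card_range]

lemma card_eq_sum_rowLen : μ.card = ∑ i ∈ range (μ.colLen 0), μ.rowLen i := by
  rw [YoungDiagram.card, card_eq_sum_card_fiberwise (f := Prod.fst) (t := range (μ.colLen 0))]
  · exact sum_congr rfl fun i _ ↦ μ.rowLen_eq_card.symm
  · rintro ⟨i, j⟩ hij
    have := YoungDiagram.mem_iff_lt_colLen.1 hij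
    have := μ.colLen_anti 0 j j.zero_le
    simp only [coe_range, Set.mem_Iio]
    lia

lemma sum_betaSet : ∑ x ∈ betaSet μ, x = μ.card + (#(betaSet μ)).choose 2 := by
  rw [card_betaSet, betaSet, sum_image (injOn_bead μ)]
  simp only [bead]
  rw [sum_add_distrib, ← card_eq_sum_rowLen, sum_range_reflect (fun i ↦ i), sum_range_id,
    Nat.choose_two_right]

lemma strictMono_gap : StrictMono (gap μ) := by
  intro j j' hlt
  have := μ.colLen_anti j j' hlt.le
  simp only [gap]
  lia

lemma bead_ne_gap {i : ℕ} (hi : i < μ.colLen 0) (j : ℕ) : bead μ i ≠ gap μ j := by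
  have := lt_rowLen_iff_lt_colLen (μ := μ) (i := i) (j := j)
  have := μ.colLen_anti 0 j j.zero_le
  simp only [bead, gap]
  lia

lemma exists_gap_eq {x : ℕ} (hx : x ∉ betaSet μ) : ∃ j, gap μ j = x := by
  have hne {i : ℕ} (hi : i < μ.colLen 0) : bead μ i ≠ x := fun h ↦ hx (h ▸ bead_mem_betaSet hi)
  have hex : ∃ i, μ.colLen 0 ≤ i ∨ bead μ i ≤ x := ⟨μ.colLen 0, .inl le_rfl⟩
  set i := Nat.find hex
  have hspec : μ.colLen 0 ≤ i ∨ bead μ i < x := by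
    by_cases hi : i < μ.colLen 0
    · exact (Nat.find_spec hex).imp_right fun hle ↦ hle.lt_of_ne (hne hi)
    · exact .inl (not_lt.1 hi)
  have hile : i ≤ μ.colLen 0 := Nat.find_min' hex (.inl le_rfl)
  obtain ⟨j, hj⟩ : ∃ j, x + i = μ.colLen 0 + j := by
    refine Nat.exists_eq_add_of_le ?_
    simp only [bead] at hspec
    lia
  have hle : μ.colLen j ≤ i := by
    have := lt_rowLen_iff_lt_colLen (μ := μ) (i := i) (j := j)
    have := lt_rowLen_iff_lt_colLen (μ := μ) (i := i) (j := 0)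
    simp only [bead] at *
    lia
  have hge : i ≤ μ.colLen j := by
    obtain hi | hi := Nat.eq_zero_or_pos i
    · lia
    have hmin : ¬(μ.colLen 0 ≤ i - 1 ∨ bead μ (i - 1) ≤ x) := Nat.find_min hex (by lia)
    have := lt_rowLen_iff_lt_colLen (μ := μ) (i := i - 1) (j := j)
    simp only [bead] at *
    lia
  refine ⟨j, ?_⟩
  simp only [gap, bead] at *
  lia

theorem range_gap : Set.range (gap μ) = (betaSet μ : Set ℕ)ᶜ := by
  ext x
  refine ⟨?_, exists_gap_eq μ⟩
  rintro ⟨j, rfl⟩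
  simpa [betaSet] using fun i hi ↦ bead_ne_gap μ hi j

lemma gap_notMem_betaSet (j : ℕ) : gap μ j ∉ betaSet μ :=
  (range_gap μ).subset ⟨j, rfl⟩

theorem betaSet_injective : Function.Injective betaSet := by
  intro μ ν h
  have hcol : μ.colLen 0 = ν.colLen 0 := by rw [← card_betaSet, ← card_betaSet, h]
  have hgap : gap μ = gap ν :=
    ((strictMono_gap μ).range_inj (strictMono_gap ν)).1 (by rw [range_gap, range_gap, h])
  ext ⟨i, j⟩
  have := congrFun hgap j
  have := μ.colLen_anti 0 j j.zero_le
  have := ν.colLen_anti 0 j j.zero_le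
  rw [YoungDiagram.mem_cells, YoungDiagram.mem_cells, YoungDiagram.mem_iff_lt_colLen,
    YoungDiagram.mem_iff_lt_colLen]
  simp only [gap] at *
  lia

end BetaSet

section OfBetaSet

variable {X : Finset ℕ}

lemma infinite_setOf_notMem (X : Finset ℕ) : (Set.ofPred (· ∉ X)).Infinite :=
  X.finite_toSet.infinite_compl

/-- The number of elements of `X` above the `j`-th element of the complement of `X`: the length of
column `j` of the partition with beta set `X`. -/
noncomputable def countAboveGap (X : Finset ℕ) (j : ℕ) : ℕ := #{x ∈ X | Nat.nth (· ∉ X) j < x}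

lemma antitone_countAboveGap (X : Finset ℕ) : Antitone (countAboveGap X) := fun _ _ hle ↦
  card_le_card <| monotone_filter_right _ fun _ _ ↦
    ((Nat.nth_strictMono (infinite_setOf_notMem X)).monotone hle).trans_lt

lemma lt_sup_of_countAboveGap_pos {j : ℕ} (hj : 0 < countAboveGap X j) : j < X.sup id := by
  obtain ⟨x, hx⟩ := card_pos.1 hj
  rw [mem_filter] at hx
  calc
    j ≤ Nat.nth (· ∉ X) j := (Nat.nth_strictMono (infinite_setOf_notMem X)).le_apply
    _ < x := hx.2
    _ ≤ X.sup id := le_sup (f := id) hx.1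

lemma countAboveGap_zero (h0 : 0 ∉ X) : countAboveGap X 0 = #X := by
  rw [countAboveGap, Nat.nth_zero_of_zero h0, filter_true_of_mem fun x hx ↦ ?_]
  exact Nat.pos_of_ne_zero fun h ↦ h0 (h ▸ hx)

lemma nth_notMem_add_countAboveGap (X : Finset ℕ) (j : ℕ) :
    Nat.nth (· ∉ X) j + countAboveGap X j = j + #X := by
  set g := Nat.nth (· ∉ X) j
  have hgX : g ∉ X := Nat.nth_mem_of_infinite (infinite_setOf_notMem X) j
  have hcount : #{x ∈ range g | x ∉ X} = j := by
    rw [← Nat.count_eq_card_filter_range, Nat.count_nth_of_infinite (infinite_setOf_notMem X)]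
  have hrange : #{x ∈ range g | x ∈ X} + #{x ∈ range g | x ∉ X} = g := by
    rw [card_filter_add_card_filter_not, card_range]
  have hX : #{x ∈ X | g < x} + #{x ∈ X | ¬g < x} = #X := card_filter_add_card_filter_not _
  have hbelow : {x ∈ X | ¬g < x} = {x ∈ range g | x ∈ X} := by
    ext x
    have : x = g → x ∉ X := fun h ↦ h ▸ hgX
    simp only [mem_filter, mem_range]
    grind
  rw [hbelow] at hX
  rw [countAboveGap]
  lia

/-- The partition with beta set `X`, for `0 ∉ X`. -/
noncomputable def ofBetaSet (X : Finset ℕ) : YoungDiagram where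
  cells := {c ∈ range #X ×ˢ range (X.sup id) | c.1 < countAboveGap X c.2}
  isLowerSet := by
    rintro ⟨i, j⟩ ⟨i', j'⟩ ⟨hi, hj⟩ h
    have := antitone_countAboveGap X hj
    simp only [coe_filter, mem_product, mem_range, Set.mem_ofPred_eq] at *
    lia

lemma colLen_ofBetaSet (X : Finset ℕ) (j : ℕ) : (ofBetaSet X).colLen j = countAboveGap X j := by
  refine eq_of_forall_lt_iff fun i ↦ ?_
  have hle : countAboveGap X j ≤ #X := card_filter_le _ _
  have hsup := lt_sup_of_countAboveGap_pos (X := X) (j := j)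
  rw [← YoungDiagram.mem_iff_lt_colLen, ← YoungDiagram.mem_cells]
  simp only [ofBetaSet, mem_filter, mem_product, mem_range]
  lia

lemma gap_ofBetaSet (h0 : 0 ∉ X) : gap (ofBetaSet X) = Nat.nth (· ∉ X) := by
  ext j
  have hsum := nth_notMem_add_countAboveGap X j
  have hle : countAboveGap X j ≤ #X := card_filter_le _ _
  rw [gap, colLen_ofBetaSet, colLen_ofBetaSet, countAboveGap_zero h0]
  lia

theorem betaSet_ofBetaSet (h0 : 0 ∉ X) : betaSet (ofBetaSet X) = X := by
  have hrange := range_gap (ofBetaSet X)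
  rw [gap_ofBetaSet h0, Nat.range_nth_of_infinite (infinite_setOf_notMem X)] at hrange
  exact coe_injective (compl_injective hrange.symm)

end OfBetaSet

/-- The beads of the `t`-abacus of `X` are pushed up: if a position carries a bead, so does the
preceding position on the same runner. -/
def IsFlush (t : ℕ) (X : Finset ℕ) : Prop := ∀ x, x + t ∈ X → x ∈ X

section IsFlush

variable {t : ℕ} {X : Finset ℕ}

lemma IsFlush.mem_of_add_mul_mem (hX : IsFlush t X) {x : ℕ} (k : ℕ) (hx : x + t * k ∈ X) :
    x ∈ X := by
  induction k with
  | zero => simpa using hx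
  | succ k ih => exact ih (hX _ (by rwa [add_assoc, ← mul_add_one]))

lemma IsFlush.exists_forall_mem_iff_lt (hX : IsFlush t X) (ht : t ≠ 0) (x : ℕ) :
    ∃ u, ∀ i, x + t * i ∈ X ↔ i < u := by
  have hex : ∃ i, x + t * i ∉ X := by
    by_contra! h
    refine X.finite_toSet.not_infinite (Set.infinite_of_injective_forall_mem (fun i j hij ↦ ?_) h)
    simpa [ht] using hij
  refine ⟨Nat.find hex, fun i ↦ ⟨fun hi ↦ ?_, fun hi ↦ not_not.1 (Nat.find_min hex hi)⟩⟩
  by_contra! hle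
  refine Nat.find_spec hex (hX.mem_of_add_mul_mem (i - Nat.find hex) ?_)
  rwa [add_assoc, ← mul_add, Nat.add_sub_cancel' hle]

lemma bead_eq_gap_add_hookLength {μ : YoungDiagram} {i j : ℕ} (h : (i, j) ∈ μ) :
    bead μ i = gap μ j + μ.hookLength i j := by
  have := YoungDiagram.mem_iff_lt_rowLen.1 h
  have := YoungDiagram.mem_iff_lt_colLen.1 h
  have := μ.colLen_anti 0 j j.zero_le
  simp only [bead, gap, YoungDiagram.hookLength]
  lia

lemma mem_of_gap_le_bead {μ : YoungDiagram} {i j : ℕ} (hi : i < μ.colLen 0)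
    (h : gap μ j ≤ bead μ i) : (i, j) ∈ μ := by
  rw [YoungDiagram.mem_iff_lt_colLen]
  have := lt_rowLen_iff_lt_colLen (μ := μ) (i := i) (j := j)
  have := μ.colLen_anti 0 j j.zero_le
  simp only [bead, gap] at h
  lia

theorem forall_not_dvd_hookLength_iff (μ : YoungDiagram) (t : ℕ) :
    (∀ c ∈ μ.cells, ¬t ∣ μ.hookLength c.1 c.2) ↔ IsFlush t (betaSet μ) := by
  constructor
  · intro hcore x hx
    by_contra hx'
    obtain ⟨j, rfl⟩ := exists_gap_eq μ hx'
    obtain ⟨i, hi, hbead⟩ := mem_image.1 hx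
    have hij := mem_of_gap_le_bead (j := j) (mem_range.1 hi) (by lia)
    refine hcore (i, j) hij (dvd_of_eq ?_)
    have := bead_eq_gap_add_hookLength hij
    lia
  · rintro hflush ⟨i, j⟩ hij ⟨k, hk⟩
    refine gap_notMem_betaSet μ j (hflush.mem_of_add_mul_mem k ?_)
    rw [← hk, ← bead_eq_gap_add_hookLength hij]
    have := YoungDiagram.mem_iff_lt_colLen.1 hij
    exact bead_mem_betaSet (this.trans_le (μ.colLen_anti 0 j j.zero_le))

end IsFlush

/-- The set of the first `u` numbers `≡ 1` and the first `v` numbers `≡ 2` modulo 3. -/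
def runners (uv : ℕ × ℕ) : Finset ℕ :=
  (range uv.1).image (1 + 3 * ·) ∪ (range uv.2).image (2 + 3 * ·)

section Runners

variable (uv : ℕ × ℕ) (i : ℕ)

lemma three_mul_notMem_runners : 3 * i ∉ runners uv := by
  simp only [runners, mem_union, mem_image, mem_range]
  lia

lemma one_add_mem_runners : 1 + 3 * i ∈ runners uv ↔ i < uv.1 := by
  simp only [runners, mem_union, mem_image, mem_range]
  grind

lemma two_add_mem_runners : 2 + 3 * i ∈ runners uv ↔ i < uv.2 := by
  simp only [runners, mem_union, mem_image, mem_range]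
  grind

lemma runners_injective : Function.Injective runners := by
  intro uv uv' h
  ext <;> refine eq_of_forall_lt_iff fun i ↦ ?_
  · rw [← one_add_mem_runners, h, one_add_mem_runners]
  · rw [← two_add_mem_runners, h, two_add_mem_runners]

lemma isFlush_runners : IsFlush 3 (runners uv) := by
  intro x hx
  simp only [runners, mem_union, mem_image, mem_range] at hx ⊢
  obtain ⟨i, hi, h⟩ | ⟨i, hi, h⟩ := hx
  · exact .inl ⟨i - 1, by lia, by lia⟩
  · exact .inr ⟨i - 1, by lia, by lia⟩

lemma IsFlush.exists_runners_eq {X : Finset ℕ} (hX : IsFlush 3 X) (h0 : 0 ∉ X) :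
    ∃ uv, runners uv = X := by
  obtain ⟨u, hu⟩ := hX.exists_forall_mem_iff_lt three_ne_zero 1
  obtain ⟨v, hv⟩ := hX.exists_forall_mem_iff_lt three_ne_zero 2
  refine ⟨(u, v), ?_⟩
  ext x
  obtain ⟨i, rfl | rfl | rfl⟩ : ∃ i, x = 3 * i ∨ x = 1 + 3 * i ∨ x = 2 + 3 * i := ⟨x / 3, by lia⟩
  · refine iff_of_false (three_mul_notMem_runners _ i) fun hx ↦ h0 (hX.mem_of_add_mul_mem i ?_)
    rwa [zero_add]
  · rw [one_add_mem_runners, hu]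
  · rw [two_add_mem_runners, hv]

lemma disjoint_runners :
    Disjoint ((range uv.1).image (1 + 3 * ·)) ((range uv.2).image (2 + 3 * ·)) := by
  rw [disjoint_left]
  simp only [mem_image]
  lia

lemma injective_add_three_mul (c : ℕ) : Function.Injective (c + 3 * ·) := fun i j h ↦ by
  simpa using h

lemma card_runners : #(runners uv) = uv.1 + uv.2 := by
  rw [runners, card_union_of_disjoint (disjoint_runners uv),
    card_image_of_injective _ (injective_add_three_mul 1),
    card_image_of_injective _ (injective_add_three_mul 2), card_range, card_range]

lemma two_mul_sum_runners :
    2 * ∑ x ∈ runners uv, x + uv.1 = 3 * uv.1 ^ 2 + 3 * uv.2 ^ 2 + uv.2 := by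
  have hsum (c m : ℕ) : 2 * ∑ i ∈ range m, (c + 3 * i) + 3 * m = 2 * c * m + 3 * m ^ 2 := by
    induction m with
    | zero => simp
    | succ m ih =>
      rw [sum_range_succ]
      linarith
  rw [runners, sum_union (disjoint_runners uv), sum_image (injective_add_three_mul 1).injOn,
    sum_image (injective_add_three_mul 2).injOn]
  linarith [hsum 1 uv.1, hsum 2 uv.2]

/-- The parameters `(u, v)` of the 3-cores of size `n`, see `card_eq_iff_mem_coreParams`. -/
def coreParams (n : ℕ) : Set (ℕ × ℕ) :=
  {uv | uv.1 ^ 2 + uv.2 ^ 2 + uv.2 = n + uv.1 * uv.2}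

lemma card_eq_iff_mem_coreParams {μ : YoungDiagram} {uv : ℕ × ℕ} (h : betaSet μ = runners uv)
    (n : ℕ) : μ.card = n ↔ uv ∈ coreParams n := by
  have hsum := sum_betaSet μ
  have htwo := two_mul_sum_runners uv
  rw [h, card_runners] at hsum
  have hchoose (m : ℕ) : 2 * m.choose 2 + m = m ^ 2 := by
    induction m with
    | zero => rfl
    | succ m ih =>
      rw [Nat.choose_succ_succ', Nat.choose_one_right]
      linarith
  have hcard : μ.card + uv.1 * uv.2 = uv.1 ^ 2 + uv.2 ^ 2 + uv.2 := by
    linarith [hchoose (uv.1 + uv.2)]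
  rw [coreParams, Set.mem_ofPred_eq, ← hcard]
  lia

end Runners

/-- The 3-core with parameters `(u, v)`. -/
noncomputable def threeCore (uv : ℕ × ℕ) : YoungDiagram := ofBetaSet (runners uv)

lemma betaSet_threeCore (uv : ℕ × ℕ) : betaSet (threeCore uv) = runners uv :=
  betaSet_ofBetaSet (three_mul_notMem_runners uv 0)

lemma threeCore_injective : Function.Injective threeCore := fun uv uv' h ↦
  runners_injective (by rw [← betaSet_threeCore, h, betaSet_threeCore])

lemma range_threeCore : Set.range threeCore = {μ | μ.IsThreeCore} := by
  ext μ
  refine Iff.trans ?_ (forall_not_dvd_hookLength_iff μ 3).symm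
  constructor
  · rintro ⟨uv, rfl⟩
    rw [betaSet_threeCore]
    exact isFlush_runners uv
  · intro hμ
    obtain ⟨uv, huv⟩ := hμ.exists_runners_eq (zero_notMem_betaSet μ)
    exact ⟨uv, betaSet_injective (by rw [betaSet_threeCore, huv])⟩

lemma setOf_isThreeCore_eq_image (n : ℕ) :
    {μ : YoungDiagram | μ.card = n ∧ μ.IsThreeCore} =
      threeCore '' coreParams n := by
  ext μ
  constructor
  · rintro ⟨hn, hμ⟩
    obtain ⟨uv, rfl⟩ := range_threeCore.superset hμ
    exact ⟨uv, (card_eq_iff_mem_coreParams (betaSet_threeCore uv) n).1 hn, rfl⟩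
  · rintro ⟨uv, huv, rfl⟩
    exact ⟨(card_eq_iff_mem_coreParams (betaSet_threeCore uv) n).2 huv,
      range_threeCore.subset ⟨uv, rfl⟩⟩

section NcardCoreParams

open EisensteinInt

lemma ncard_coreParams_eq_ncard_normSet_inter (n : ℕ) :
    (coreParams n).ncard = (normSet (3 * n + 1) ∩ primarySector).ncard := by
  let f (uv : ℕ × ℕ) : EisensteinInt := ⟨2 * uv.2 + 1 - uv.1, 2 * uv.1 - uv.2⟩
  have hnorm (uv : ℕ × ℕ) : (f uv).norm = 3 * (uv.1 ^ 2 + uv.2 ^ 2 + uv.2 - uv.1 * uv.2) + 1 := by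
    rw [norm_eq]
    ring
  refine Set.ncard_congr (fun uv _ ↦ f uv) ?_ ?_ ?_
  · intro uv huv
    refine ⟨?_, ?_⟩
    · rw [normSet, Set.mem_ofPred_eq, hnorm]
      have : (uv.1 : ℤ) ^ 2 + uv.2 ^ 2 + uv.2 = n + uv.1 * uv.2 := mod_cast huv
      push_cast
      linarith
    · dsimp [primarySector, f]
      lia
  · rintro ⟨u, v⟩ ⟨u', v'⟩ _ _ h
    have hcoord := QuadraticAlgebra.ext_iff.1 h
    dsimp only [f] at hcoord
    ext <;> dsimp only <;> lia
  · rintro ⟨x, y⟩ ⟨hz, hmod, hpos₁, hpos₂⟩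
    dsimp only at hmod hpos₁ hpos₂
    have hinv : f (((x + 2 * y - 1) / 3).toNat, ((2 * x + y - 2) / 3).toNat) = ⟨x, y⟩ := by
      ext <;> dsimp [f] <;> lia
    generalize ((x + 2 * y - 1) / 3).toNat = u, ((2 * x + y - 2) / 3).toNat = v at hinv
    refine ⟨(u, v), ?_, hinv⟩
    rw [← hinv, normSet, Set.mem_ofPred_eq, hnorm] at hz
    rw [coreParams, Set.mem_ofPred_eq]
    zify
    push_cast at hz
    linarith

theorem ncard_coreParams (n : ℕ) : ((coreParams n).ncard : ℤ) = chiSum (3 * n + 1) := by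
  have hsix := ncard_normSet_eq_six_mul n
  have hnorm := ncard_normSet (N := 3 * n + 1) (by lia)
  rw [ncard_coreParams_eq_ncard_normSet_inter]
  lia

end NcardCoreParams

theorem a3_eq_chiSum (n : ℕ) : (a3 n : ℤ) = chiSum (3 * n + 1) := by
  rw [← ncard_coreParams, ← Set.ncard_image_of_injective _ threeCore_injective,
    ← setOf_isThreeCore_eq_image]
  rfl

lemma finite_setOf_card_eq (n : ℕ) : {μ : YoungDiagram | μ.card = n}.Finite := by
  refine (((range n ×ˢ range n).powerset.finite_toSet).preimage
    fun _ _ _ _ ↦ YoungDiagram.ext).subset ?_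
  rintro μ rfl
  simp only [Set.mem_preimage, mem_coe, mem_powerset]
  rintro ⟨i, j⟩ hij
  have hcol : μ.colLen j ≤ μ.card := μ.colLen_eq_card.trans_le (card_filter_le _ _)
  have hrow : μ.rowLen i ≤ μ.card := μ.rowLen_eq_card.trans_le (card_filter_le _ _)
  rw [mem_product, mem_range, mem_range]
  exact ⟨(YoungDiagram.mem_iff_lt_colLen.1 hij).trans_le hcol,
    (YoungDiagram.mem_iff_lt_rowLen.1 hij).trans_le hrow⟩

section Convolution

variable {α β : Type*} (P : α → Prop) (Q : β → Prop) (f : α → ℕ) (g : β → ℕ)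

lemma setOf_add_eq_eq_biUnion (n : ℕ) :
    {p : α × β | f p.1 + g p.2 = n ∧ P p.1 ∧ Q p.2} =
      ⋃ ij ∈ (antidiagonal n : Set (ℕ × ℕ)), {a | f a = ij.1 ∧ P a} ×ˢ
        {b | g b = ij.2 ∧ Q b} := by
  ext ⟨a, b⟩
  simp only [Set.mem_iUnion₂, mem_coe, HasAntidiagonal.mem_antidiagonal, Set.mem_prod,
    Set.mem_ofPred_eq, Prod.exists, exists_prop]
  grind

variable {P Q f g}

lemma finite_setOf_add_eq (hP : ∀ m, {a | f a = m ∧ P a}.Finite)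
    (hQ : ∀ m, {b | g b = m ∧ Q b}.Finite) (n : ℕ) :
    {p : α × β | f p.1 + g p.2 = n ∧ P p.1 ∧ Q p.2}.Finite := by
  rw [setOf_add_eq_eq_biUnion]
  exact (finite_toSet _).biUnion fun ij _ ↦ (hP ij.1).prod (hQ ij.2)

lemma ncard_setOf_add_eq (hP : ∀ m, {a | f a = m ∧ P a}.Finite)
    (hQ : ∀ m, {b | g b = m ∧ Q b}.Finite) (n : ℕ) :
    {p : α × β | f p.1 + g p.2 = n ∧ P p.1 ∧ Q p.2}.ncard =
      ∑ ij ∈ antidiagonal n, {a | f a = ij.1 ∧ P a}.ncard * {b | g b = ij.2 ∧ Q b}.ncard := by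
  rw [setOf_add_eq_eq_biUnion, (finite_toSet _).ncard_biUnion fun ij _ ↦ (hP ij.1).prod (hQ ij.2),
    finsum_mem_coe_finset]
  · exact sum_congr rfl fun _ _ ↦ Set.ncard_prod
  · rintro ⟨i, j⟩ _ ⟨i', j'⟩ _ hne
    refine Set.disjoint_left.2 fun p hp hp' ↦ hne ?_
    exact Prod.ext (hp.1.1.symm.trans hp'.1.1) (hp.2.1.symm.trans hp'.2.1)

end Convolution

lemma B3_eq_sum (n : ℕ) :
    B3 n = ∑ ij ∈ antidiagonal n, a3 ij.1 * ∑ kl ∈ antidiagonal ij.2, a3 kl.1 * a3 kl.2 := by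
  have hfin (m : ℕ) : {μ : YoungDiagram | μ.card = m ∧ μ.IsThreeCore}.Finite :=
    (finite_setOf_card_eq m).subset fun _ h ↦ h.1
  have ha3 (m : ℕ) : a3 m = {μ : YoungDiagram | μ.card = m ∧ μ.IsThreeCore}.ncard := rfl
  have hB3 : B3 n = {p : YoungDiagram × YoungDiagram × YoungDiagram |
      p.1.card + (p.2.1.card + p.2.2.card) = n ∧
        p.1.IsThreeCore ∧ p.2.1.IsThreeCore ∧ p.2.2.IsThreeCore}.ncard := by
    simp only [← add_assoc]
    rfl
  rw [hB3, ncard_setOf_add_eq (g := fun q : YoungDiagram × YoungDiagram ↦ q.1.card + q.2.card)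
    (Q := fun q ↦ q.1.IsThreeCore ∧ q.2.IsThreeCore) hfin (finite_setOf_add_eq hfin hfin) n]
  simp only [ha3, ncard_setOf_add_eq hfin hfin]

theorem B3_eq_squareChiSum (n : ℕ) : (B3 n : ℤ) = squareChiSum (n + 1) := by
  rw [B3_eq_sum, ← sum_chiSum_mul_sum_chiSum_mul_chiSum]
  push_cast
  simp only [a3_eq_chiSum]

/-- For a prime p ≡ 2 (mod 3) and k, n ≥ 0:
(p²+1)·B₃(pᵏn + pᵏ − 1) = (p²ᵏ−(−1)ᵏ)·B₃(pn + p − 1) + (p²ᵏ+(−1)ᵏp²)·B₃(n). -/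
theorem B3_rec_two_mod_three (p k n : ℕ) (hp : p.Prime) (hp3 : p % 3 = 2) :
    ((p : ℤ) ^ 2 + 1) * B3 (p ^ k * n + p ^ k - 1) =
      ((p : ℤ) ^ (2 * k) - (-1) ^ k) * B3 (p * n + p - 1) +
      ((p : ℤ) ^ (2 * k) + (-1) ^ k * (p : ℤ) ^ 2) * B3 n := by
  have hshift {q : ℕ} (hq : 0 < q) : q * n + q - 1 + 1 = q * (n + 1) := by
    rw [Nat.sub_add_cancel (by lia), mul_add_one]
  simp only [B3_eq_squareChiSum, hshift hp.pos, hshift (pow_pos hp.pos k)]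
  exact squareChiSum_prime_pow_mul hp hp3 (n + 1) k
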